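/- Let Ω ⊂ R^n be open, f ∈ W^{2,1}_loc(Ω), and let B ⊂ Ω be a Borel set with H^{n-1}(B) < ∞. Then for every ε > 0 there exists a Borel set B_ε ⊂ B such that f* restricted to B_ε is Lipschitz continuous outside a set of 1-capacity zero, and H^{n-1}(B \ B_ε) < ε. -/

import Mathlib

open MeasureTheory Metric Filter Set
open scoped ENNReal Topology NNReal

noncomputable section

/-- Euclidean space ℝⁿ. -/
abbrev En (n : ℕ) := EuclideanSpace ℝ (Fin n)

variable {n : ℕ}

/-- The average of `f` over the ball `B(x,r)`. -/
def ballAvg (f : En n → ℝ) (x : En n) (r : ℝ) : ℝ :=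
  ⨍ y in Metric.ball x r, f y

open scoped Classical in
/-- The precise representative of `f`: the limit of ball averages where it exists, `0` otherwise. -/
def preciseRep (f : En n → ℝ) (x : En n) : ℝ :=
  if h : ∃ L : ℝ, Tendsto (fun r => ballAvg f x r) (nhdsWithin 0 (Set.Ioi 0)) (nhds L)
  then h.choose else 0

/-- A test function: smooth, compactly supported, with support inside `Ω`. -/
def IsTest (Ω : Set (En n)) (η : En n → ℝ) : Prop :=
  ContDiff ℝ (⊤ : ℕ∞) η ∧ HasCompactSupport η ∧ tsupport η ⊆ Ω

/-- `g` is the weak partial derivative of `f` in direction `v`, on `Ω`. -/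
def HasWeakPartialOn (Ω : Set (En n)) (f g : En n → ℝ) (v : En n) : Prop :=
  ∀ η : En n → ℝ, IsTest Ω η →
    ∫ x, f x * fderiv ℝ η x v = - ∫ x, g x * η x

/-- `g` is the weak gradient of `f` on `Ω`. -/
def HasWeakGradientOn (Ω : Set (En n)) (f : En n → ℝ) (g : En n → En n) : Prop :=
  ∀ i : Fin n, HasWeakPartialOn Ω f (fun x => g x i) (EuclideanSpace.single i 1)

/-- `f ∈ W^{1,p}(ℝⁿ)` with weak gradient `g`. -/
def MemW1p (p : ℝ) (f : En n → ℝ) (g : En n → En n) : Prop :=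
  AEStronglyMeasurable f volume ∧ AEStronglyMeasurable g volume ∧
  HasWeakGradientOn Set.univ f g ∧
  Integrable (fun x => |f x| ^ p) ∧ Integrable (fun x => ‖g x‖ ^ p)

/-- `f ∈ W^{1,p}_loc(Ω)` with weak gradient `g`. -/
def MemW1pLoc (p : ℝ) (Ω : Set (En n)) (f : En n → ℝ) (g : En n → En n) : Prop :=
  AEStronglyMeasurable f volume ∧ AEStronglyMeasurable g volume ∧
  HasWeakGradientOn Ω f g ∧
  ∀ K : Set (En n), K ⊆ Ω → IsCompact K →
    IntegrableOn (fun x => |f x| ^ p) K ∧ IntegrableOn (fun x => ‖g x‖ ^ p) K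

/-- `f ∈ W^{2,p}_loc(Ω)` with weak gradient `g` and weak second derivatives `h`. -/
def MemW2pLoc (p : ℝ) (Ω : Set (En n)) (f : En n → ℝ)
    (g : En n → En n) (h : En n → Fin n → En n) : Prop :=
  AEStronglyMeasurable f volume ∧ AEStronglyMeasurable g volume ∧
  HasWeakGradientOn Ω f g ∧
  (∀ i : Fin n, HasWeakGradientOn Ω (fun x => g x i) (fun x => h x i)) ∧
  ∀ K : Set (En n), K ⊆ Ω → IsCompact K →
    IntegrableOn (fun x => |f x| ^ p) K ∧ IntegrableOn (fun x => ‖g x‖ ^ p) K ∧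
    ∀ i : Fin n, IntegrableOn (fun x => ‖h x i‖ ^ p) K

/-- `f ∈ W^{2,p}(ℝⁿ)` with weak gradient `g` and weak second derivatives `h`. -/
def MemW2p (p : ℝ) (f : En n → ℝ) (g : En n → En n) (h : En n → Fin n → En n) : Prop :=
  AEStronglyMeasurable f volume ∧ AEStronglyMeasurable g volume ∧
  HasWeakGradientOn Set.univ f g ∧
  (∀ i : Fin n, HasWeakGradientOn Set.univ (fun x => g x i) (fun x => h x i)) ∧
  Integrable (fun x => |f x| ^ p) ∧ Integrable (fun x => ‖g x‖ ^ p) ∧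
  ∀ i : Fin n, Integrable (fun x => ‖h x i‖ ^ p)

/-- The `p`-capacity of a compact set. -/
def capK (p : ℝ) (F : Set (En n)) : ℝ≥0∞ :=
  ⨅ (g : En n → ℝ) (_ : ContDiff ℝ (⊤ : ℕ∞) g ∧ HasCompactSupport g ∧ ∀ x ∈ F, 1 ≤ g x),
    ∫⁻ x, (‖fderiv ℝ g x‖₊ : ℝ≥0∞) ^ p

/-- The `p`-capacity of an open set, by inner regularity over compact subsets. -/
def capOpen (p : ℝ) (U : Set (En n)) : ℝ≥0∞ :=
  ⨆ (F : Set (En n)) (_ : F ⊆ U ∧ IsCompact F), capK p F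

/-- The `p`-capacity of an arbitrary set, by outer regularity over open supersets. -/
def cap (p : ℝ) (E : Set (En n)) : ℝ≥0∞ :=
  ⨅ (U : Set (En n)) (_ : E ⊆ U ∧ IsOpen U), capOpen p U

/-- `f` restricted to `s` is Lipschitz outside a subset of `s` of `p`-capacity zero. -/
def LipschitzOnQE (p : ℝ) (f : En n → ℝ) (s : Set (En n)) : Prop :=
  ∃ N : Set (En n), N ⊆ s ∧ cap p N = 0 ∧ ∃ K : ℝ≥0, LipschitzOnWith K f (s \ N)

/-- The multiplicity function: the number of preimages of `y` in `A` under `φ`. -/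
def Nphi (φ : En n → En n) (A : Set (En n)) (y : En n) : ℝ≥0∞ :=
  Measure.count {x ∈ A | φ x = y}

end

open MeasureTheory Metric Filter Set
open scoped ENNReal Topology NNReal

theorem lh_scale {n : ℕ} (F : En n → ℝ≥0∞) (hF : Measurable F) (x0 : En n) (ρ : ℝ)
    (x : En n) (hx : x ∈ ball x0 ρ) (s : ℝ) (hs : 1/2 ≤ s) (hs1 : s ≤ 1) :
    ∫⁻ y in ball x0 ρ, F ((1 - s) • x + s • y) ≤ 2 ^ n * ∫⁻ z in ball x0 ρ, F z := by
  have hspos : 0 < s := by linarith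
  have h1 : ∫⁻ y in ball x0 ρ, F ((1 - s) • x + s • y) ≤
      ∫⁻ y, (ball x0 ρ).indicator F ((1 - s) • x + s • y) := by
    rw [← lintegral_indicator measurableSet_ball]
    apply lintegral_mono
    intro y
    by_cases hy : y ∈ ball x0 ρ
    · have hm : (1 - s) • x + s • y ∈ ball x0 ρ :=
        convex_ball x0 ρ hx hy (by linarith) hspos.le (by ring)
      simp only [indicator_of_mem hy, indicator_of_mem hm, le_refl]
    · simp [indicator_of_notMem hy]
  refine h1.trans ?_
  have hm : Measurable ((ball x0 ρ).indicator F) := hF.indicator measurableSet_ball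
  have h2 : ∫⁻ y, (ball x0 ρ).indicator F ((1 - s) • x + s • y) =
      ∫⁻ y, (fun z => (ball x0 ρ).indicator F ((1 - s) • x + z)) y
        ∂(Measure.map (s • ·) (volume : Measure (En n))) := by
    rw [lintegral_map]
    · exact hm.comp (measurable_const_add _)
    · exact measurable_const_smul s
  rw [h2, Measure.map_addHaar_smul _ hspos.ne', lintegral_smul_measure,
    lintegral_add_left_eq_self (fun z => (ball x0 ρ).indicator F z),
    lintegral_indicator measurableSet_ball, smul_eq_mul]
  gcongr
  rw [abs_of_nonneg (by positivity)]
  have : (s ^ Module.finrank ℝ (En n))⁻¹ ≤ 2 ^ n := by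
    rw [finrank_euclideanSpace, Fintype.card_fin, ← inv_pow]
    gcongr
    rw [inv_le_comm₀ hspos (by norm_num)]
    linarith
  calc ENNReal.ofReal _ ≤ ENNReal.ofReal (2 ^ n) := ENNReal.ofReal_le_ofReal this
    _ = 2 ^ n := by rw [ENNReal.ofReal_pow (by norm_num)]; simp

theorem lh_ftc {n : ℕ} (v : En n → ℝ) (hv : ContDiff ℝ 1 v) (x y : En n) :
    ‖v x - v y‖ₑ ≤ ‖y - x‖ₑ * ∫⁻ s in Icc (0:ℝ) 1, ‖fderiv ℝ v ((1 - s) • x + s • y)‖ₑ := by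
  have hd : Differentiable ℝ v := hv.differentiable (by norm_num)
  have hc : Continuous (fderiv ℝ v) := hv.continuous_fderiv (by norm_num)
  have hderiv : ∀ s : ℝ, HasDerivAt (fun s : ℝ => v ((1 - s) • x + s • y))
      (fderiv ℝ v ((1 - s) • x + s • y) (y - x)) s := by
    intro s
    have h1 : HasDerivAt (fun s : ℝ => (1 - s) • x + s • y) (y - x) s := by
      have := (((hasDerivAt_id s).const_sub 1).smul_const x).add ((hasDerivAt_id s).smul_const y)
      have e : y - x = (-1 : ℝ) • x + (1 : ℝ) • y := by module
      rw [e]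
      exact this
    exact (hd _).hasFDerivAt.comp_hasDerivAt s h1
  have hcont : Continuous (fun s : ℝ => fderiv ℝ v ((1 - s) • x + s • y) (y - x)) := by
    fun_prop
  have := intervalIntegral.integral_eq_sub_of_hasDerivAt (a := 0) (b := 1)
    (fun s _ => hderiv s) (hcont.intervalIntegrable _ _)
  have h2 : v x - v y = - ∫ s in (0:ℝ)..1, fderiv ℝ v ((1 - s) • x + s • y) (y - x) := by
    rw [this]; simp
  rw [h2, enorm_neg, intervalIntegral.integral_of_le zero_le_one,
    ← integral_Icc_eq_integral_Ioc]
  refine (enorm_integral_le_lintegral_enorm _).trans ?_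
  rw [← lintegral_const_mul']
  · apply lintegral_mono
    intro s
    dsimp only
    rw [mul_comm]
    exact ContinuousLinearMap.le_opENorm _ _
  · exact enorm_ne_top

theorem lh_poinc_smooth {n : ℕ} (v : En n → ℝ) (hv : ContDiff ℝ 1 v) (x0 : En n) (ρ : ℝ) :
    ∫⁻ x in ball x0 ρ, ∫⁻ y in ball x0 ρ, ‖v x - v y‖ₑ ≤
      ENNReal.ofReal (2 * ρ) * (2 ^ n * volume (ball x0 ρ) *
        ∫⁻ z in ball x0 ρ, ‖fderiv ℝ v z‖ₑ) := by
  set B := ball x0 ρ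
  set F : En n → ℝ≥0∞ := fun z => ‖fderiv ℝ v z‖ₑ with hFdef
  have hc : Continuous (fderiv ℝ v) := hv.continuous_fderiv (by norm_num)
  have hFc : Continuous F := hc.enorm
  have hF : Measurable F := hFc.measurable
  have hjoint : Measurable (fun p : (En n × En n) × ℝ => F ((1 - p.2) • p.1.1 + p.2 • p.1.2)) := by
    apply Continuous.measurable
    fun_prop
  have h1 : ∀ s ∈ Icc (0:ℝ) 1, ∫⁻ x in B, ∫⁻ y in B, F ((1 - s) • x + s • y) ≤
      2 ^ n * volume B * ∫⁻ z in B, F z := by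
    intro s hs
    have hj : Measurable (fun p : En n × En n => F ((1 - s) • p.1 + s • p.2)) := by
      apply Continuous.measurable; fun_prop
    by_cases h : 1/2 ≤ s
    · calc _ ≤ ∫⁻ x in B, 2 ^ n * ∫⁻ z in B, F z :=
            setLIntegral_mono measurable_const (fun x hx => lh_scale F hF x0 ρ x hx s h hs.2)
        _ = _ := by rw [setLIntegral_const]; ring
    · rw [lintegral_lintegral_swap hj.aemeasurable]
      calc _ ≤ ∫⁻ x in B, 2 ^ n * ∫⁻ z in B, F z := by
            refine setLIntegral_mono measurable_const (fun y hy => ?_)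
            have := lh_scale F hF x0 ρ y hy (1 - s) (by linarith) (by linarith [hs.1])
            refine le_trans (le_of_eq ?_) this
            refine lintegral_congr fun x => ?_
            rw [sub_sub_cancel, add_comm]
        _ = _ := by rw [setLIntegral_const]; ring
  calc ∫⁻ x in B, ∫⁻ y in B, ‖v x - v y‖ₑ
      ≤ ∫⁻ x in B, ∫⁻ y in B, ENNReal.ofReal (2 * ρ) *
          ∫⁻ s in Icc (0:ℝ) 1, F ((1 - s) • x + s • y) := by
        refine setLIntegral_mono' measurableSet_ball fun x hx =>
          setLIntegral_mono' measurableSet_ball fun y hy => ?_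
        refine (lh_ftc v hv x y).trans ?_
        gcongr
        rw [← ofReal_norm]
        apply ENNReal.ofReal_le_ofReal
        rw [← dist_eq_norm]
        have := mem_ball.1 hx
        have := mem_ball.1 hy
        linarith [dist_triangle_right y x x0]
    _ = ENNReal.ofReal (2 * ρ) * ∫⁻ s in Icc (0:ℝ) 1, ∫⁻ x in B, ∫⁻ y in B,
          F ((1 - s) • x + s • y) := by
        have e1 : ∀ x, ∫⁻ y in B, ENNReal.ofReal (2 * ρ) *
          ∫⁻ s in Icc (0:ℝ) 1, F ((1 - s) • x + s • y) = ENNReal.ofReal (2 * ρ) *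
            ∫⁻ s in Icc (0:ℝ) 1, ∫⁻ y in B, F ((1 - s) • x + s • y) := by
          intro x
          rw [lintegral_const_mul' _ _ ENNReal.ofReal_ne_top]
          congr 1
          rw [lintegral_lintegral_swap]
          apply Measurable.aemeasurable
          apply Continuous.measurable
          simp only [Function.uncurry_def]
          fun_prop
        simp_rw [e1]
        rw [lintegral_const_mul' _ _ ENNReal.ofReal_ne_top]
        congr 1
        rw [lintegral_lintegral_swap]
        apply Measurable.aemeasurable
        have : Measurable (fun q : (En n × ℝ) × En n => F ((1 - q.1.2) • q.1.1 + q.1.2 • q.2)) := by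
          apply Continuous.measurable; fun_prop
        exact this.lintegral_prod_right'
    _ ≤ ENNReal.ofReal (2 * ρ) * ∫⁻ s in Icc (0:ℝ) 1, 2 ^ n * volume B * ∫⁻ z in B, F z := by
        gcongr 1
        exact setLIntegral_mono measurable_const h1
    _ = _ := by
        rw [setLIntegral_const]; simp

theorem lh_tsum_liminf {ι : Type*} [Countable ι] (f : ι → ℕ → ℝ≥0∞) :
    ∑' i, liminf (f i) atTop ≤ liminf (fun k => ∑' i, f i k) atTop := by
  letI : MeasurableSpace ι := ⊤
  have : ∫⁻ i, liminf (fun k => f i k) atTop ∂(Measure.count : Measure ι) ≤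
    liminf (fun k => ∫⁻ i, f i k ∂(Measure.count : Measure ι)) atTop :=
    lintegral_liminf_le (fun k => measurable_from_top)
  simpa only [lintegral_count] using this

theorem lh_add_liminf (f g : ℕ → ℝ≥0∞) :
    liminf f atTop + liminf g atTop ≤ liminf (f + g) atTop := by
  have := lh_tsum_liminf (ι := Bool) (fun b => if b then f else g)
  simp only [tsum_bool] at this
  simp only [Bool.false_eq_true, if_false, if_true] at this
  rw [add_comm]
  refine this.trans (le_of_eq ?_)
  congr 1
  funext k
  simp [add_comm]

theorem lh_gdct {α : Type*} [MeasurableSpace α] (μ : Measure α) (a b : ℕ → α → ℝ≥0∞)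
    (A Bf : α → ℝ≥0∞) (ha : ∀ k, AEMeasurable (a k) μ) (hb : ∀ k, AEMeasurable (b k) μ)
    (hab : ∀ k, ∀ᵐ x ∂μ, a k x ≤ b k x)
    (hA : ∀ᵐ x ∂μ, Tendsto (fun k => a k x) atTop (𝓝 (A x)))
    (hB : ∀ᵐ x ∂μ, Tendsto (fun k => b k x) atTop (𝓝 (Bf x)))
    (S : ℝ≥0∞) (hS : S ≠ ⊤) (hbS : ∀ k, ∫⁻ x, b k x ∂μ = S) (hBS : ∫⁻ x, Bf x ∂μ = S)
    (X : ℕ → ℝ≥0∞) (X0 : ℝ≥0∞) (hX : ∀ k, X k ≤ ∫⁻ x, a k x ∂μ) (hX0 : X0 ≤ liminf X atTop) :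
    X0 ≤ ∫⁻ x, A x ∂μ := by
  have hAm : AEMeasurable A μ := aemeasurable_of_tendsto_metrizable_ae' ha hA
  have hBm : AEMeasurable Bf μ := aemeasurable_of_tendsto_metrizable_ae' hb hB
  have hABle : ∀ᵐ x ∂μ, A x ≤ Bf x := by
    filter_upwards [hA, hB, ae_all_iff.2 hab] with x h1 h2 h3
    exact le_of_tendsto_of_tendsto' h1 h2 h3
  have hBfin : ∀ᵐ x ∂μ, Bf x < ⊤ := ae_lt_top' hBm (by rw [hBS]; exact hS)
  have h1 : ∫⁻ x, (Bf x - A x) ∂μ ≤ liminf (fun k => ∫⁻ x, (b k x - a k x) ∂μ) atTop := by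
    calc _ ≤ ∫⁻ x, liminf (fun k => b k x - a k x) atTop ∂μ := by
          apply lintegral_mono_ae
          filter_upwards [hA, hB, hBfin, hABle] with x h1 h2 h3 h4
          rw [(ENNReal.Tendsto.sub h2 h1 (Or.inl h3.ne)).liminf_eq]
      _ ≤ _ := lintegral_liminf_le' (fun k => (hb k).sub (ha k))
  have h2 : X0 + ∫⁻ x, (Bf x - A x) ∂μ ≤ S := by
    calc _ ≤ liminf X atTop + liminf (fun k => ∫⁻ x, (b k x - a k x) ∂μ) atTop := by gcongr
      _ ≤ liminf (X + (fun k => ∫⁻ x, (b k x - a k x) ∂μ)) atTop := lh_add_liminf _ _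
      _ ≤ liminf (fun k : ℕ => S) atTop := by
          refine liminf_le_liminf (Eventually.of_forall fun k => ?_)
          calc X k + ∫⁻ x, (b k x - a k x) ∂μ ≤ ∫⁻ x, a k x ∂μ + ∫⁻ x, (b k x - a k x) ∂μ := by
                gcongr; exact hX k
            _ = ∫⁻ x, (a k x + (b k x - a k x)) ∂μ := (lintegral_add_left' (ha k) _).symm
            _ = ∫⁻ x, b k x ∂μ := by
                apply lintegral_congr_ae
                filter_upwards [hab k] with x hx
                exact add_tsub_cancel_of_le hx
            _ = S := hbS k
      _ = S := by simp
  have h3 : S = ∫⁻ x, A x ∂μ + ∫⁻ x, (Bf x - A x) ∂μ := by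
    rw [← hBS, ← lintegral_add_left' hAm]
    apply lintegral_congr_ae
    filter_upwards [hABle] with x hx
    exact (add_tsub_cancel_of_le hx).symm
  rw [h3] at h2
  refine (ENNReal.add_le_add_iff_right ?_).1 h2
  intro h
  rw [h] at h3
  exact hS (by simp [h3])

open MeasureTheory Metric Filter Set
open scoped ENNReal Topology NNReal
open scoped Convolution

theorem lh_moll_fderiv {n : ℕ} (u : En n → ℝ) (G : En n → En n) (hu : Integrable u)
    (hG : Integrable G) (U : Set (En n)) (hw : HasWeakGradientOn U u G)
    (η : ContDiffBump (0 : En n)) (x : En n) (hx : closedBall x η.rOut ⊆ U) :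
    ‖fderiv ℝ (η.normed volume ⋆[ContinuousLinearMap.lsmul ℝ ℝ, volume] u) x‖ₑ =
      ‖(η.normed volume ⋆[ContinuousLinearMap.lsmul ℝ ℝ, volume] G) x‖ₑ := by
  set f := η.normed (volume : Measure (En n)) with hf
  have hfc : HasCompactSupport f := η.hasCompactSupport_normed
  have hfs : ContDiff ℝ (⊤ : ℕ∞) f := η.contDiff_normed
  have hf1 : ContDiff ℝ 1 f := hfs.of_le (by exact_mod_cast le_top)
  have hfd : Differentiable ℝ f := hf1.differentiable (by norm_num)
  have hD := hfc.hasFDerivAt_convolution_left (L := ContinuousLinearMap.lsmul ℝ ℝ) (μ := volume)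
    hf1 hu.locallyIntegrable x
  have key : ∀ i : Fin n, fderiv ℝ (f ⋆[ContinuousLinearMap.lsmul ℝ ℝ, volume] u) x
      (EuclideanSpace.single i 1) =
      ((f ⋆[ContinuousLinearMap.lsmul ℝ ℝ, volume] G) x) i := by
    intro i
    rw [hD.fderiv]
    have hex : ConvolutionExistsAt (fderiv ℝ f) u x
        ((ContinuousLinearMap.lsmul ℝ ℝ).precompL (En n)) volume :=
      (hfc.fderiv (𝕜 := ℝ)).convolutionExists_left _ (hf1.continuous_fderiv (by norm_num))
        hu.locallyIntegrable x
    have hex2 : ConvolutionExistsAt f G x (ContinuousLinearMap.lsmul ℝ ℝ) volume :=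
      hfc.convolutionExists_left _ hf1.continuous hG.locallyIntegrable x
    have e1 : (fderiv ℝ f ⋆[(ContinuousLinearMap.lsmul ℝ ℝ).precompL (En n), volume] u) x
        (EuclideanSpace.single i 1) =
        ∫ t, fderiv ℝ f (x - t) (EuclideanSpace.single i 1) * u t := by
      rw [convolution_eq_swap, ContinuousLinearMap.integral_apply hex.integrable_swap]
      rfl
    have e2 : ((f ⋆[ContinuousLinearMap.lsmul ℝ ℝ, volume] G) x) i =
        ∫ t, f (x - t) * G t i := by
      rw [convolution_eq_swap]
      have := (EuclideanSpace.proj (𝕜 := ℝ) i : En n →L[ℝ] ℝ).integral_comp_comm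
        hex2.integrable_swap
      simpa using this.symm
    rw [e1, e2]
    have htest : IsTest U (fun t => f (x - t)) := by
      refine ⟨hfs.comp (contDiff_const.sub contDiff_id), ?_, ?_⟩
      · exact hfc.comp_homeomorph (Homeomorph.subLeft x)
      · refine subset_trans ?_ hx
        apply closure_minimal _ isClosed_closedBall
        intro t ht
        have : x - t ∈ Function.support f := ht
        rw [hf, η.support_normed_eq] at this
        simp only [mem_ball, dist_zero_right] at this
        rw [mem_closedBall, dist_comm, dist_eq_norm]
        exact this.le
    have h1 := hw i _ htest
    have h2 : ∀ t, fderiv ℝ (fun t => f (x - t)) t (EuclideanSpace.single i 1) =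
        - fderiv ℝ f (x - t) (EuclideanSpace.single i 1) := by
      intro t
      have : HasFDerivAt (fun t => f (x - t))
          ((fderiv ℝ f (x - t)).comp (-(ContinuousLinearMap.id ℝ (En n)))) t := by
        refine (hfd (x - t)).hasFDerivAt.comp t ?_
        exact (hasFDerivAt_id t).const_sub x
      rw [this.fderiv]
      simp
    simp_rw [h2, mul_neg, integral_neg, neg_inj] at h1
    simpa only [mul_comm] using h1
  have : fderiv ℝ (f ⋆[ContinuousLinearMap.lsmul ℝ ℝ, volume] u) x =
      innerSL ℝ ((f ⋆[ContinuousLinearMap.lsmul ℝ ℝ, volume] G) x) := by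
    apply ContinuousLinearMap.coe_injective
    apply (EuclideanSpace.basisFun (Fin n) ℝ).toBasis.ext
    intro i
    simp [key i, EuclideanSpace.inner_single_right]
  rw [this]
  rw [← ofReal_norm, ← ofReal_norm, innerSL_apply_norm]

theorem lh_lint_conv {n : ℕ} (G : En n → En n) (hG : Integrable G) (η : ContDiffBump (0 : En n)) :
    ∫⁻ x, ‖(η.normed volume ⋆[ContinuousLinearMap.lsmul ℝ ℝ, volume] (fun y => ‖G y‖)) x‖ₑ =
      ∫⁻ x, ‖G x‖ₑ := by
  have hfi : Integrable (η.normed (volume : Measure (En n))) := η.integrable_normed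
  have hI := hfi.integrable_convolution (ContinuousLinearMap.lsmul ℝ ℝ) hG.norm
  have hnn : ∀ x, 0 ≤ (η.normed volume ⋆[ContinuousLinearMap.lsmul ℝ ℝ, volume]
      (fun y => ‖G y‖)) x := by
    intro x
    rw [convolution_def]
    apply integral_nonneg
    intro t
    exact mul_nonneg (η.nonneg_normed t) (norm_nonneg _)
  have h1 := integral_convolution (ContinuousLinearMap.lsmul ℝ ℝ) hfi hG.norm
    (ν := (volume : Measure (En n)))
  rw [η.integral_normed] at h1
  simp only [ContinuousLinearMap.lsmul_apply, one_smul] at h1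
  have h2 : ∫⁻ x, ‖(η.normed volume ⋆[ContinuousLinearMap.lsmul ℝ ℝ, volume]
      (fun y => ‖G y‖)) x‖ₑ = ENNReal.ofReal (∫ x, (η.normed volume
        ⋆[ContinuousLinearMap.lsmul ℝ ℝ, volume] (fun y => ‖G y‖)) x) := by
    rw [ofReal_integral_eq_lintegral_ofReal hI (Eventually.of_forall hnn)]
    exact lintegral_congr fun x => Real.enorm_eq_ofReal (hnn x)
  rw [h2, h1, ofReal_integral_norm_eq_lintegral_enorm hG]

/-- Poincare inequality for compositions with a weakly differentiable function. -/
theorem lh_poinc {n : ℕ} (u : En n → ℝ) (G : En n → En n) (hu : Integrable u)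
    (hG : Integrable G) (c : En n) (S : ℝ) (hw : HasWeakGradientOn (ball c S) u G)
    (φ : ℝ → ℝ) (hφ : ContDiff ℝ 1 φ) (C : ℝ≥0) (hC : ∀ s, ‖deriv φ s‖ₑ ≤ C)
    (x0 : En n) (ρ : ℝ) (τ : ℝ) (hτ : 0 < τ) (hsub : dist x0 c + ρ + τ ≤ S) :
    ∫⁻ x in ball x0 ρ, ∫⁻ y in ball x0 ρ, ‖φ (u x) - φ (u y)‖ₑ ≤
      ENNReal.ofReal (2 * ρ) * (2 ^ n * volume (ball x0 ρ) *
        ∫⁻ z in ball x0 ρ, ‖deriv φ (u z)‖ₑ * ‖G z‖ₑ) := by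
  set B := ball x0 ρ with hB
  let η : ℕ → ContDiffBump (0 : En n) := fun k =>
    ⟨τ / (2 * (k + 2)), τ / (k + 2), by positivity, by
      apply div_lt_div_of_pos_left hτ <;> [positivity; linarith [(Nat.cast_nonneg k : (0:ℝ) ≤ k)]]⟩
  have hrout : Tendsto (fun k => (η k).rOut) atTop (𝓝 0) := by
    have := tendsto_const_div_atTop_nhds_zero_nat τ
    have := (tendsto_add_atTop_iff_nat 2).2 this
    simpa [η] using this
  have hrin : ∀ᶠ k in atTop, (η k).rOut ≤ 2 * (η k).rIn := by
    refine Eventually.of_forall fun k => le_of_eq ?_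
    simp only [η]
    field_simp
  have hrle : ∀ k, (η k).rOut < τ := by
    intro k
    simp only [η]
    apply div_lt_self hτ
    linarith [(Nat.cast_nonneg k : (0:ℝ) ≤ k)]
  let v : ℕ → En n → ℝ := fun k =>
    (η k).normed volume ⋆[ContinuousLinearMap.lsmul ℝ ℝ, volume] u
  let V : ℕ → En n → En n := fun k =>
    (η k).normed volume ⋆[ContinuousLinearMap.lsmul ℝ ℝ, volume] G
  let N : ℕ → En n → ℝ := fun k =>
    (η k).normed volume ⋆[ContinuousLinearMap.lsmul ℝ ℝ, volume] (fun y => ‖G y‖)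
  have hv1 : ∀ k, ContDiff ℝ 1 (v k) := fun k =>
    HasCompactSupport.contDiff_convolution_left (n := 1) _ (η k).hasCompactSupport_normed
      (η k).contDiff_normed hu.locallyIntegrable
  have hVc : ∀ k, Continuous (V k) := fun k =>
    HasCompactSupport.continuous_convolution_left _ (η k).hasCompactSupport_normed
      (η k).continuous_normed hG.locallyIntegrable
  have hNc : ∀ k, Continuous (N k) := fun k =>
    HasCompactSupport.continuous_convolution_left _ (η k).hasCompactSupport_normed
      (η k).continuous_normed hG.norm.locallyIntegrable
  have hvt : ∀ᵐ x, Tendsto (fun k => v k x) atTop (𝓝 (u x)) :=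
    ContDiffBump.ae_convolution_tendsto_right_of_locallyIntegrable hrout hrin hu.locallyIntegrable
  have hVt : ∀ᵐ x, Tendsto (fun k => V k x) atTop (𝓝 (G x)) :=
    ContDiffBump.ae_convolution_tendsto_right_of_locallyIntegrable hrout hrin hG.locallyIntegrable
  have hNt : ∀ᵐ x, Tendsto (fun k => N k x) atTop (𝓝 (‖G x‖)) :=
    ContDiffBump.ae_convolution_tendsto_right_of_locallyIntegrable hrout hrin
      hG.norm.locallyIntegrable
  have hVN : ∀ k x, ‖V k x‖ₑ ≤ ‖N k x‖ₑ := by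
    intro k x
    have h0 : ‖V k x‖ ≤ N k x := by
      simp only [V, N, convolution_def]
      refine (norm_integral_le_integral_norm _).trans (le_of_eq ?_)
      apply integral_congr_ae
      refine Eventually.of_forall fun t => ?_
      simp [norm_smul, abs_of_nonneg ((η k).nonneg_normed t)]
    rw [← ofReal_norm, ← ofReal_norm]
    apply ENNReal.ofReal_le_ofReal
    exact h0.trans (le_abs_self _)
  have hfd : ∀ k, ∀ x ∈ B, ‖fderiv ℝ (v k) x‖ₑ = ‖V k x‖ₑ := by
    intro k x hx
    apply lh_moll_fderiv u G hu hG (ball c S) hw (η k) x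
    intro y hy
    have h1 := mem_ball.1 hx
    have h2 := mem_closedBall.1 hy
    have h3 := hrle k
    rw [mem_ball]
    linarith [dist_triangle4 y x x0 c]
  have hφc : Continuous (deriv φ) := hφ.continuous_deriv (by norm_num)
  set K : ℝ≥0∞ := ENNReal.ofReal (2 * ρ) * (2 ^ n * volume B) with hK
  have hKtop : K ≠ ⊤ := by
    refine ENNReal.mul_ne_top ENNReal.ofReal_ne_top (ENNReal.mul_ne_top (by simp) ?_)
    exact measure_ball_lt_top.ne
  have hgoal := lh_gdct (volume : Measure (En n))
    (fun k => B.indicator (fun z => K * (‖deriv φ (v k z)‖ₑ * ‖V k z‖ₑ)))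
    (fun k z => K * (C * ‖N k z‖ₑ))
    (B.indicator (fun z => K * (‖deriv φ (u z)‖ₑ * ‖G z‖ₑ)))
    (fun z => K * (C * ‖G z‖ₑ))
    (fun k => by
      apply Measurable.aemeasurable
      apply Measurable.indicator _ measurableSet_ball
      have h1 : Measurable (fun z => ‖deriv φ (v k z)‖ₑ) :=
        (hφc.comp (hv1 k).continuous).enorm.measurable
      have h2 : Measurable (fun z => ‖V k z‖ₑ) := (hVc k).enorm.measurable
      exact (h1.mul h2).const_mul _)
    (fun k => by
      apply Measurable.aemeasurable
      have h2 : Measurable (fun z => ‖N k z‖ₑ) := (hNc k).enorm.measurable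
      exact (h2.const_mul _).const_mul _)
    (fun k => Eventually.of_forall fun z => by
      refine (indicator_le_self _ _ _).trans ?_
      dsimp only
      gcongr
      · exact hC _
      · exact hVN k z)
    (by
      filter_upwards [hvt, hVt] with z h1 h2
      by_cases hz : z ∈ B
      · simp only [indicator_of_mem hz]
        refine ENNReal.Tendsto.const_mul ?_ (Or.inr hKtop)
        refine ENNReal.Tendsto.mul ?_ (Or.inr enorm_ne_top) h2.enorm (Or.inr enorm_ne_top)
        exact ((hφc.tendsto _).comp h1).enorm
      · simp [indicator_of_notMem hz])
    (by
      filter_upwards [hNt] with z h1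
      refine ENNReal.Tendsto.const_mul ?_ (Or.inr hKtop)
      refine ENNReal.Tendsto.const_mul ?_ (Or.inr ENNReal.coe_ne_top)
      have := h1.enorm
      simpa using this)
    (K * (C * ∫⁻ z, ‖G z‖ₑ))
    (ENNReal.mul_ne_top hKtop (ENNReal.mul_ne_top ENNReal.coe_ne_top hG.2.ne))
    (fun k => by
      rw [lintegral_const_mul' _ _ hKtop, lintegral_const_mul' _ _ ENNReal.coe_ne_top,
        lh_lint_conv G hG (η k)])
    (by rw [lintegral_const_mul' _ _ hKtop, lintegral_const_mul' _ _ ENNReal.coe_ne_top])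
    (fun k => ∫⁻ x in B, ∫⁻ y in B, ‖φ (v k x) - φ (v k y)‖ₑ)
    (∫⁻ x in B, ∫⁻ y in B, ‖φ (u x) - φ (u y)‖ₑ)
    (fun k => by
      have h1 := lh_poinc_smooth (fun x => φ (v k x)) (hφ.comp (hv1 k)) x0 ρ
      refine h1.trans (le_of_eq ?_)
      rw [lintegral_indicator measurableSet_ball, lintegral_const_mul' _ _ hKtop, hK, ← mul_assoc]
      congr 1
      apply setLIntegral_congr_fun measurableSet_ball
      intro z hz
      dsimp only
      have hd : HasFDerivAt (fun x => φ (v k x)) (deriv φ (v k z) • fderiv ℝ (v k) z) z := by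
        have a1 : HasDerivAt φ (deriv φ (v k z)) (v k z) :=
          (hφ.differentiable (by norm_num) _).hasDerivAt
        exact a1.comp_hasFDerivAt z (((hv1 k).differentiable (by norm_num)) z).hasFDerivAt
      rw [hd.fderiv, enorm_smul, hfd k z hz])
    (by
      have hinner : ∀ᵐ x, Tendsto (fun k => φ (v k x)) atTop (𝓝 (φ (u x))) := by
        filter_upwards [hvt] with x hx
        exact (hφ.continuous.tendsto _).comp hx
      have hvm : ∀ k, Continuous (fun x => φ (v k x)) := fun k =>
        hφ.continuous.comp (hv1 k).continuous
      calc ∫⁻ x in B, ∫⁻ y in B, ‖φ (u x) - φ (u y)‖ₑ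
          ≤ ∫⁻ x in B, liminf (fun k => ∫⁻ y in B, ‖φ (v k x) - φ (v k y)‖ₑ) atTop := by
            apply lintegral_mono_ae
            filter_upwards [ae_restrict_of_ae hinner] with x hx
            calc ∫⁻ y in B, ‖φ (u x) - φ (u y)‖ₑ
                ≤ ∫⁻ y in B, liminf (fun k => ‖φ (v k x) - φ (v k y)‖ₑ) atTop := by
                  apply lintegral_mono_ae
                  filter_upwards [ae_restrict_of_ae hinner] with y hy
                  rw [((hx.sub hy).enorm).liminf_eq]
              _ ≤ _ := lintegral_liminf_le fun k =>
                  (continuous_const.sub (hvm k)).enorm.measurable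
        _ ≤ _ := by
            refine lintegral_liminf_le fun k => ?_
            have : Measurable (fun p : En n × En n => ‖φ (v k p.1) - φ (v k p.2)‖ₑ) :=
              (((hvm k).comp continuous_fst).sub ((hvm k).comp continuous_snd)).enorm.measurable
            exact this.lintegral_prod_right')
  rw [lintegral_indicator measurableSet_ball, lintegral_const_mul' _ _ hKtop, hK] at hgoal
  refine hgoal.trans (le_of_eq ?_)
  ring

open MeasureTheory Metric Filter Set
open scoped ENNReal Topology NNReal

theorem lh_S_zero (s : ℝ) (hs : s ∉ Icc (0:ℝ) 1) : deriv Real.smoothTransition s = 0 := by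
  rcases lt_or_ge s 0 with h | h
  · have : Real.smoothTransition =ᶠ[𝓝 s] fun _ => (0:ℝ) := by
      filter_upwards [Iio_mem_nhds h] with y hy
      exact Real.smoothTransition.zero_of_nonpos (le_of_lt hy)
    rw [this.deriv_eq]; simp
  · have h1 : 1 < s := by
      by_contra h2
      exact hs ⟨h, not_lt.1 h2⟩
    have : Real.smoothTransition =ᶠ[𝓝 s] fun _ => (1:ℝ) := by
      filter_upwards [Ioi_mem_nhds h1] with y hy
      exact Real.smoothTransition.one_of_one_le (le_of_lt hy)
    rw [this.deriv_eq]; simp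

theorem lh_S_bound : ∃ C : ℝ≥0, ∀ s : ℝ, ‖deriv Real.smoothTransition s‖ ≤ C := by
  have hc : Continuous (deriv Real.smoothTransition) :=
    (Real.smoothTransition.contDiff (n := 1)).continuous_deriv (by norm_num)
  obtain ⟨C, hC⟩ := (isCompact_Icc (a := (0:ℝ)) (b := 1)).exists_bound_of_continuousOn
    hc.continuousOn
  refine ⟨C.toNNReal, fun s => ?_⟩
  by_cases hs : s ∈ Icc (0:ℝ) 1
  · exact (hC s hs).trans (Real.le_coe_toNNReal C)
  · rw [lh_S_zero s hs]; simp

/-- smooth approximations of the indicator of `t < |s|`. -/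
noncomputable def lhPsi (t δ s : ℝ) : ℝ :=
  Real.smoothTransition ((s - t) / δ) + Real.smoothTransition ((-s - t) / δ)

theorem lhPsi_contDiff (t δ : ℝ) : ContDiff ℝ 1 (lhPsi t δ) := by
  have h : ContDiff ℝ 1 Real.smoothTransition := Real.smoothTransition.contDiff
  unfold lhPsi
  apply ContDiff.add
  · exact h.comp ((contDiff_id.sub contDiff_const).div_const _)
  · exact h.comp ((contDiff_id.neg.sub contDiff_const).div_const _)

theorem lhPsi_deriv (t δ s : ℝ) : deriv (lhPsi t δ) s =
    deriv Real.smoothTransition ((s - t) / δ) / δ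
      - deriv Real.smoothTransition ((-s - t) / δ) / δ := by
  have h : Differentiable ℝ Real.smoothTransition :=
    (Real.smoothTransition.contDiff (n := 1)).differentiable (by norm_num)
  have h1 : HasDerivAt (fun s : ℝ => (s - t) / δ) (1 / δ) s :=
    ((hasDerivAt_id s).sub_const t).div_const δ
  have h2 : HasDerivAt (fun s : ℝ => (-s - t) / δ) (-1 / δ) s :=
    ((hasDerivAt_id s).neg.sub_const t).div_const δ
  have h3 := ((h ((s - t) / δ)).hasDerivAt.comp s h1).add
    ((h ((-s - t) / δ)).hasDerivAt.comp s h2)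
  have h4 : deriv (lhPsi t δ) s = _ := h3.deriv
  rw [h4]; ring

theorem lhPsi_deriv_zero (t δ s : ℝ) (ht : 0 < t) (hδ : 0 < δ) (hs : δ < |(|s| - t)|) :
    deriv (lhPsi t δ) s = 0 := by
  rw [lhPsi_deriv, lh_S_zero, lh_S_zero]
  · simp
  · intro h
    rw [mem_Icc, le_div_iff₀ hδ, div_le_iff₀ hδ] at h
    rw [abs_of_nonpos (by linarith : s ≤ 0), abs_of_nonneg (by linarith)] at hs
    linarith
  · intro h
    rw [mem_Icc, le_div_iff₀ hδ, div_le_iff₀ hδ] at h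
    rw [abs_of_nonneg (by linarith : 0 ≤ s), abs_of_nonneg (by linarith)] at hs
    linarith

theorem lhPsi_deriv_bound (C : ℝ≥0) (hC : ∀ s : ℝ, ‖deriv Real.smoothTransition s‖ ≤ C)
    (t δ s : ℝ) (hδ : 0 < δ) : ‖deriv (lhPsi t δ) s‖ ≤ 2 * C / δ := by
  rw [lhPsi_deriv]
  refine (norm_sub_le _ _).trans ?_
  rw [norm_div, norm_div, Real.norm_of_nonneg hδ.le, ← add_div]
  gcongr
  linarith [hC ((s - t) / δ), hC ((-s - t) / δ)]

theorem lhPsi_eq_zero (t δ s : ℝ) (hδ : 0 < δ) (hs : |s| ≤ t) : lhPsi t δ s = 0 := by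
  have := abs_le.1 hs
  unfold lhPsi
  rw [Real.smoothTransition.zero_of_nonpos, Real.smoothTransition.zero_of_nonpos]
  · simp
  · exact div_nonpos_of_nonpos_of_nonneg (by linarith) hδ.le
  · exact div_nonpos_of_nonpos_of_nonneg (by linarith) hδ.le

theorem lhPsi_eq_one (t δ s : ℝ) (ht : 0 < t) (hδ : 0 < δ) (hs : t + δ ≤ |s|) :
    lhPsi t δ s = 1 := by
  unfold lhPsi
  rcases le_total 0 s with h | h
  · rw [abs_of_nonneg h] at hs
    rw [Real.smoothTransition.one_of_one_le, Real.smoothTransition.zero_of_nonpos]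
    · simp
    · exact div_nonpos_of_nonpos_of_nonneg (by linarith) hδ.le
    · rw [le_div_iff₀ hδ]; linarith
  · rw [abs_of_nonpos h] at hs
    rw [add_comm, Real.smoothTransition.one_of_one_le, Real.smoothTransition.zero_of_nonpos]
    · simp
    · exact div_nonpos_of_nonpos_of_nonneg (by linarith) hδ.le
    · rw [le_div_iff₀ hδ]; linarith

/-- choice of a good level. -/
theorem lh_level (μ : Measure ℝ) [IsFiniteMeasure μ] (l : ℝ) (hl : 0 < l) :
    ∃ t ∈ Ioo (l / 4) (l / 2), ∃ D : ℝ≥0∞, D ≤ μ univ / ENNReal.ofReal (l / 4) ∧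
      Tendsto (fun r => μ (closedBall t r) / volume (closedBall t r)) (𝓝[>] 0) (𝓝 D) := by
  have h1 := Besicovitch.ae_tendsto_rnDeriv μ (volume : Measure ℝ)
  have hv : volume (Ioo (l/4) (l/2)) = ENNReal.ofReal (l / 4) := by
    rw [Real.volume_Ioo]; congr 1; ring
  have h2 : ∀ᵐ t ∂(volume.restrict (Ioo (l/4) (l/2))), t ∈ Ioo (l/4) (l/2) ∧
      Tendsto (fun r => μ (closedBall t r) / volume (closedBall t r)) (𝓝[>] 0)
        (𝓝 (μ.rnDeriv volume t)) := by
    filter_upwards [ae_restrict_of_ae h1, ae_restrict_mem measurableSet_Ioo] with t a b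
    exact ⟨b, a⟩
  have hne : volume.restrict (Ioo (l/4) (l/2)) ≠ 0 := by
    intro h
    have := congrArg (fun m : Measure ℝ => m univ) h
    simp only [Measure.restrict_apply_univ, hv] at this
    simp at this
    linarith
  obtain ⟨t, ht, hle⟩ := exists_notMem_null_le_laverage hne
    (Measure.measurable_rnDeriv μ volume).aemeasurable (ae_iff.1 h2)
  simp only [mem_ofPred_eq, not_not] at ht
  refine ⟨t, ht.1, _, hle.trans ?_, ht.2⟩
  rw [laverage_eq, Measure.restrict_apply_univ, hv]
  gcongr
  exact (Measure.setLIntegral_rnDeriv_le _).trans (measure_mono (subset_univ _))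

open MeasureTheory Metric Filter Set
open scoped ENNReal Topology NNReal

theorem lh_vol {n : ℕ} (x : En n) (r : ℝ) (hr : 0 < r) :
    volume (ball x r) = ENNReal.ofReal r ^ n * volume (ball (0 : En n) 1) := by
  rw [Measure.addHaar_ball_of_pos _ _ hr, finrank_euclideanSpace, Fintype.card_fin,
    ENNReal.ofReal_pow hr.le]

theorem lh_vol_pos {n : ℕ} (x : En n) (r : ℝ) (hr : 0 < r) : volume (ball x r) ≠ 0 :=
  (measure_ball_pos _ _ hr).ne'

/-- first type of balls. -/
theorem lh_type1 {n : ℕ} (u : En n → ℝ) (hum : Measurable u) (G : En n → En n) (hu : Integrable u)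
    (hG : Integrable G) (c : En n) (S : ℝ) (hw : HasWeakGradientOn (ball c S) u G)
    (C : ℝ≥0) (hC : ∀ s : ℝ, ‖deriv Real.smoothTransition s‖ ≤ C) (t : ℝ) (ht : 0 < t)
    (x0 : En n) (ρ : ℝ) (hρ : 0 < ρ) (τ : ℝ) (hτ : 0 < τ) (hsub : dist x0 c + ρ + τ ≤ S)
    (h1 : volume (ball x0 ρ) ≤ 2 ^ (n + 1) * volume (ball x0 ρ ∩ {x | t < |u x|}))
    (h2 : volume (ball x0 ρ) ≤ 2 * volume (ball x0 ρ \ {x | t < |u x|})) :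
    volume (ball x0 ρ) ≤ 2 ^ (n + 2) * ENNReal.ofReal (2 * ρ) * 2 ^ n *
      liminf (fun k : ℕ => ENNReal.ofReal (2 * C * (k + 1)) *
        ∫⁻ z in ball x0 ρ ∩ {x | |(|u x| - t)| ≤ 1 / ((k : ℝ) + 1)}, ‖G z‖ₑ) atTop := by
  set B := ball x0 ρ with hB
  set E := {x | t < |u x|} with hE
  have hEm : MeasurableSet E := measurableSet_lt measurable_const hum.abs
  have hBtop : volume B ≠ ⊤ := measure_ball_lt_top.ne
  have hB0 : volume B ≠ 0 := lh_vol_pos x0 ρ hρ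
  let δ : ℕ → ℝ := fun k => 1 / ((k : ℝ) + 1)
  have hδ : ∀ k, 0 < δ k := fun k => by positivity
  have hδ0 : Tendsto δ atTop (𝓝 0) := tendsto_one_div_add_atTop_nhds_zero_nat
  set W : ℕ → ℝ≥0∞ := fun k => ENNReal.ofReal (2 * C * (k + 1)) *
        ∫⁻ z in B ∩ {x | |(|u x| - t)| ≤ 1 / ((k : ℝ) + 1)}, ‖G z‖ₑ with hW
  have hP : ∀ k, ∫⁻ x in B, ∫⁻ y in B, ‖lhPsi t (δ k) (u x) - lhPsi t (δ k) (u y)‖ₑ ≤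
      ENNReal.ofReal (2 * ρ) * (2 ^ n * volume B) * W k := by
    intro k
    have hb : ∀ s, ‖deriv (lhPsi t (δ k)) s‖ₑ ≤ ENNReal.ofReal (2 * C * (k + 1)) := by
      intro s
      rw [← ofReal_norm]
      apply ENNReal.ofReal_le_ofReal
      refine (lhPsi_deriv_bound C hC t (δ k) s (hδ k)).trans (le_of_eq ?_)
      simp only [δ]
      field_simp
    have := lh_poinc u G hu hG c S hw (lhPsi t (δ k)) (lhPsi_contDiff t (δ k))
      (Real.toNNReal (2 * (C:ℝ) * ((k:ℝ) + 1))) hb x0 ρ τ hτ hsub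
    refine this.trans ?_
    rw [← mul_assoc]
    gcongr
    have hm : MeasurableSet {x | |(|u x| - t)| ≤ 1 / ((k : ℝ) + 1)} :=
      measurableSet_le (hum.abs.sub measurable_const).abs measurable_const
    rw [hW]
    dsimp only
    rw [← lintegral_const_mul' _ _ ENNReal.ofReal_ne_top, inter_comm,
      ← Measure.restrict_restrict hm, ← lintegral_indicator hm]
    apply lintegral_mono
    intro z
    by_cases hz : z ∈ {x | |(|u x| - t)| ≤ 1 / ((k : ℝ) + 1)}
    · simp only [indicator_of_mem hz]
      gcongr
      exact hb _
    · have : deriv (lhPsi t (δ k)) (u z) = 0 :=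
        lhPsi_deriv_zero t (δ k) (u z) ht (hδ k) (not_le.1 hz)
      simp [this]
  have hlim : ∀ x ∈ E, ∀ y ∉ E, Tendsto (fun k => ‖lhPsi t (δ k) (u x) - lhPsi t (δ k) (u y)‖ₑ)
      atTop (𝓝 1) := by
    intro x hx y hy
    apply tendsto_const_nhds.congr'
    have hx' : t < |u x| := hx
    have hy' : |u y| ≤ t := not_lt.1 hy
    filter_upwards [hδ0.eventually_lt_const (sub_pos.2 hx')] with k hk
    rw [lhPsi_eq_one t (δ k) (u x) ht (hδ k) (by linarith), lhPsi_eq_zero t (δ k) (u y) (hδ k) hy']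
    simp
  have hmψ : ∀ k, Measurable (fun x => lhPsi t (δ k) (u x)) := fun k =>
    (lhPsi_contDiff t (δ k)).continuous.measurable.comp hum
  have h3 : volume (B ∩ E) * volume (B \ E) ≤
      liminf (fun k => ∫⁻ x in B, ∫⁻ y in B, ‖lhPsi t (δ k) (u x) - lhPsi t (δ k) (u y)‖ₑ)
        atTop := by
    calc volume (B ∩ E) * volume (B \ E) = ∫⁻ x in B ∩ E, ∫⁻ y in B \ E, 1 := by
          simp [mul_comm]
      _ ≤ ∫⁻ x in B ∩ E, ∫⁻ y in B \ E,
            liminf (fun k => ‖lhPsi t (δ k) (u x) - lhPsi t (δ k) (u y)‖ₑ) atTop := by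
          refine setLIntegral_mono' (measurableSet_ball.inter hEm) fun x hx =>
            setLIntegral_mono' (measurableSet_ball.diff hEm) fun y hy => ?_
          rw [(hlim x hx.2 y hy.2).liminf_eq]
      _ ≤ ∫⁻ x in B, ∫⁻ y in B,
            liminf (fun k => ‖lhPsi t (δ k) (u x) - lhPsi t (δ k) (u y)‖ₑ) atTop := by
          refine (lintegral_mono fun x => ?_).trans (lintegral_mono_set inter_subset_left)
          exact lintegral_mono_set sdiff_subset
      _ ≤ ∫⁻ x in B, liminf (fun k => ∫⁻ y in B,
            ‖lhPsi t (δ k) (u x) - lhPsi t (δ k) (u y)‖ₑ) atTop := by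
          refine lintegral_mono fun x => ?_
          exact lintegral_liminf_le fun k => (measurable_const.sub (hmψ k)).enorm
      _ ≤ _ := by
          refine lintegral_liminf_le fun k => ?_
          have : Measurable (fun p : En n × En n =>
              ‖lhPsi t (δ k) (u p.1) - lhPsi t (δ k) (u p.2)‖ₑ) :=
            (((hmψ k).comp measurable_fst).sub ((hmψ k).comp measurable_snd)).enorm
          exact this.lintegral_prod_right'
  have h4 : volume (B ∩ E) * volume (B \ E) ≤
      ENNReal.ofReal (2 * ρ) * (2 ^ n * volume B) * liminf W atTop := by
    refine h3.trans ((liminf_le_liminf (Eventually.of_forall hP)).trans (le_of_eq ?_))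
    apply ENNReal.liminf_const_mul_of_ne_top
    exact ENNReal.mul_ne_top ENNReal.ofReal_ne_top (ENNReal.mul_ne_top (by simp) hBtop)
  have h5 : volume B * volume B ≤
      volume B * (2 ^ (n + 2) * ENNReal.ofReal (2 * ρ) * 2 ^ n * liminf W atTop) := by
    calc volume B * volume B ≤ (2 ^ (n + 1) * volume (B ∩ E)) * (2 * volume (B \ E)) := by
          gcongr
      _ = 2 ^ (n + 2) * (volume (B ∩ E) * volume (B \ E)) := by ring
      _ ≤ 2 ^ (n + 2) * (ENNReal.ofReal (2 * ρ) * (2 ^ n * volume B) * liminf W atTop) := by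
          gcongr
      _ = _ := by ring
  exact (ENNReal.mul_le_mul_iff_right hB0 hBtop).1 h5

/-- second type of balls. -/
theorem lh_type2 {n : ℕ} (u : En n → ℝ) (hum : Measurable u) (G : En n → En n) (hu : Integrable u)
    (hG : Integrable G) (c : En n) (S : ℝ) (hw : HasWeakGradientOn (ball c S) u G)
    (l t : ℝ) (ht : 0 < t) (htl : t ≤ l / 2)
    (x0 : En n) (ρ : ℝ) (hρ : 0 < ρ) (τ : ℝ) (hτ : 0 < τ) (hsub : dist x0 c + ρ + τ ≤ S)
    (h1 : ENNReal.ofReal l * volume (ball x0 ρ) ≤ ∫⁻ x in ball x0 ρ, ‖u x‖ₑ)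
    (h2 : volume (ball x0 ρ) ≤ 2 * volume (ball x0 ρ \ {x | t < |u x|})) :
    ENNReal.ofReal (l / 2) * volume (ball x0 ρ) ≤ 2 * ENNReal.ofReal (2 * ρ) * 2 ^ n *
      ∫⁻ z in ball x0 ρ, ‖G z‖ₑ := by
  set B := ball x0 ρ with hB
  set E := {x | t < |u x|} with hE
  have hEm : MeasurableSet E := measurableSet_lt measurable_const hum.abs
  have hBtop : volume B ≠ ⊤ := measure_ball_lt_top.ne
  have hB0 : volume B ≠ 0 := lh_vol_pos x0 ρ hρ
  have hP := lh_poinc u G hu hG c S hw id contDiff_id 1 (by simp [deriv_id']) x0 ρ τ hτ hsub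
  simp only [id, deriv_id, enorm_one, one_mul] at hP
  have h3 : ∀ y ∈ B \ E, ENNReal.ofReal (l / 2) * volume B ≤ ∫⁻ x in B, ‖u x - u y‖ₑ := by
    intro y hy
    have hy' : |u y| ≤ t := not_lt.1 hy.2
    have h4 : ENNReal.ofReal l * volume B ≤
        (∫⁻ x in B, ‖u x - u y‖ₑ) + ENNReal.ofReal (l / 2) * volume B := by
      refine h1.trans ?_
      calc ∫⁻ x in B, ‖u x‖ₑ ≤ ∫⁻ x in B, (‖u x - u y‖ₑ + ENNReal.ofReal (l / 2)) := by
            refine lintegral_mono fun x => ?_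
            calc ‖u x‖ₑ = ‖(u x - u y) + u y‖ₑ := by simp
              _ ≤ ‖u x - u y‖ₑ + ‖u y‖ₑ := enorm_add_le _ _
              _ ≤ _ := by
                  gcongr
                  rw [← ofReal_norm]
                  exact ENNReal.ofReal_le_ofReal (hy'.trans htl)
        _ = _ := by
            rw [lintegral_add_right _ measurable_const, setLIntegral_const]
    have h5 : ENNReal.ofReal l = ENNReal.ofReal (l / 2) + ENNReal.ofReal (l / 2) := by
      rw [← ENNReal.ofReal_add (by linarith) (by linarith)]; congr 1; ring
    rw [h5, add_mul] at h4
    exact (ENNReal.add_le_add_iff_right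
      (ENNReal.mul_ne_top ENNReal.ofReal_ne_top hBtop)).1 h4
  have h6 : ENNReal.ofReal (l / 2) * volume B * volume (B \ E) ≤
      ∫⁻ x in B, ∫⁻ y in B, ‖u x - u y‖ₑ := by
    calc ENNReal.ofReal (l / 2) * volume B * volume (B \ E)
        = ∫⁻ y in B \ E, ENNReal.ofReal (l / 2) * volume B := by rw [setLIntegral_const]
      _ ≤ ∫⁻ y in B \ E, ∫⁻ x in B, ‖u x - u y‖ₑ :=
          setLIntegral_mono' (measurableSet_ball.diff hEm) h3
      _ ≤ ∫⁻ y in B, ∫⁻ x in B, ‖u x - u y‖ₑ := lintegral_mono_set sdiff_subset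
      _ = _ := by
          refine lintegral_congr fun y => lintegral_congr fun x => ?_
          rw [← enorm_neg, neg_sub]
  have h7 : volume B * (ENNReal.ofReal (l / 2) * volume B) ≤
      volume B * (2 * ENNReal.ofReal (2 * ρ) * 2 ^ n * ∫⁻ z in B, ‖G z‖ₑ) := by
    calc volume B * (ENNReal.ofReal (l / 2) * volume B)
        ≤ (2 * volume (B \ E)) * (ENNReal.ofReal (l / 2) * volume B) := by gcongr
      _ = 2 * (ENNReal.ofReal (l / 2) * volume B * volume (B \ E)) := by ring
      _ ≤ 2 * (ENNReal.ofReal (2 * ρ) * (2 ^ n * volume B * ∫⁻ z in B, ‖G z‖ₑ)) := by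
          exact mul_le_mul_right (h6.trans hP) _
      _ = _ := by ring
  exact (ENNReal.mul_le_mul_iff_right hB0 hBtop).1 h7

open MeasureTheory Metric Filter Set
open scoped ENNReal Topology NNReal

noncomputable def lhNu {n : ℕ} (u : En n → ℝ) (G : En n → En n) (C l t : ℝ) (k : ℕ) :
    Measure (En n) :=
  ENNReal.ofReal (2 * C * (k + 1)) •
    ((volume.withDensity fun z => ‖G z‖ₑ).restrict {x | |(|u x| - t)| ≤ 1 / ((k : ℝ) + 1)})
  + (ENNReal.ofReal l)⁻¹ • (volume.withDensity fun z => ‖G z‖ₑ)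

theorem lh_cancel {n : ℕ} (hn : 1 ≤ n) (ρ : ℝ) (hρ : 0 < ρ) (x : En n) (L K : ℝ≥0∞)
    (h : volume (ball x ρ) ≤ K * ENNReal.ofReal ρ * L) :
    ENNReal.ofReal ρ ^ (n - 1) ≤ K / volume (ball (0 : En n) 1) * L := by
  have hw0 : volume (ball (0 : En n) 1) ≠ 0 := lh_vol_pos 0 1 one_pos
  have hwt : volume (ball (0 : En n) 1) ≠ ⊤ := measure_ball_lt_top.ne
  have hr0 : ENNReal.ofReal ρ ≠ 0 := by simpa using hρ
  have hrt : ENNReal.ofReal ρ ≠ ⊤ := ENNReal.ofReal_ne_top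
  rw [lh_vol x ρ hρ] at h
  obtain ⟨m, rfl⟩ : ∃ m, n = m + 1 := ⟨n - 1, by omega⟩
  rw [Nat.add_sub_cancel]
  rw [pow_succ] at h
  have h2 : ENNReal.ofReal ρ * (ENNReal.ofReal ρ ^ m * volume (ball (0 : En (m+1)) 1)) ≤
      ENNReal.ofReal ρ * (K * L) := by
    calc _ = _ := by ring
      _ ≤ _ := h
      _ = _ := by ring
  have h3 := (ENNReal.mul_le_mul_iff_right hr0 hrt).1 h2
  rw [← ENNReal.le_div_iff_mul_le (Or.inl hw0) (Or.inl hwt)] at h3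
  refine h3.trans (le_of_eq ?_)
  rw [div_eq_mul_inv, div_eq_mul_inv]; ring

theorem lh_half {n : ℕ} (B E : Set (En n)) (hE : MeasurableSet E) (hB : volume B ≠ ⊤)
    (h : 2 * volume (B ∩ E) ≤ volume B) : volume B ≤ 2 * volume (B \ E) := by
  have h1 : volume (B ∩ E) + volume (B \ E) = volume B := measure_inter_add_sdiff B hE
  have h2 : volume (B ∩ E) ≠ ⊤ := measure_ne_top_of_subset inter_subset_left hB
  have h3 : volume (B \ E) ≠ ⊤ := measure_ne_top_of_subset sdiff_subset hB
  rw [← h1] at h ⊢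
  rw [two_mul] at h ⊢
  have := (ENNReal.add_le_add_iff_left h2).1 h
  gcongr

theorem lh_ball {n : ℕ} (hn : 1 ≤ n) (u : En n → ℝ) (hum : Measurable u) (G : En n → En n)
    (hu : Integrable u)
    (hG : Integrable G) (c : En n) (R : ℝ) (hR : 0 < R)
    (hw : HasWeakGradientOn (ball c (4 * R)) u G)
    (C : ℝ≥0) (hC : ∀ s : ℝ, ‖deriv Real.smoothTransition s‖ ≤ C) (l t : ℝ) (ht : 0 < t)
    (htl : t ≤ l / 2)
    (hE : 2 * volume {x | t < |u x|} ≤ volume (ball (0 : En n) (R / 2)))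
    (x : En n) (hx : dist x c ≤ R) (r : ℝ) (hr : 0 < r) (hrR : r ≤ R)
    (h1 : ENNReal.ofReal l * volume (ball x r) ≤ ∫⁻ x in ball x r, ‖u x‖ₑ) :
    ∃ ρ, 0 < ρ ∧ ρ ≤ R ∧ r ≤ ρ ∧ ENNReal.ofReal ρ ^ (n - 1) ≤
      2 ^ (2 * n + 3) / volume (ball (0 : En n) 1) *
        liminf (fun k => lhNu u G C l t k (ball x ρ)) atTop := by
  classical
  set E := {x | t < |u x|} with hEd
  have hEm : MeasurableSet E := measurableSet_lt measurable_const hum.abs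
  have hl : 0 < l := by linarith
  let P : ℕ → Prop := fun j => 2 * volume (ball x (2 ^ j * r) ∩ E) ≤ volume (ball x (2 ^ j * r))
  obtain ⟨j, hj1, hj2⟩ := exists_nat_pow_near (x := R / r) (y := (2:ℝ))
    ((one_le_div hr).2 hrR) (by norm_num)
  rw [le_div_iff₀ hr] at hj1
  rw [div_lt_iff₀ hr, pow_succ] at hj2
  have hP : P j := by
    calc 2 * volume (ball x (2 ^ j * r) ∩ E) ≤ 2 * volume E := by gcongr; exact inter_subset_right
      _ ≤ _ := hE
      _ = volume (ball x (R / 2)) := by rw [lh_vol 0 _ (by positivity), lh_vol x _ (by positivity)]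
      _ ≤ _ := by
        apply measure_mono; apply ball_subset_ball; linarith
  have hex : ∃ j, P j := ⟨j, hP⟩
  set j0 := Nat.find hex with hj0
  have hPj0 : P j0 := Nat.find_spec hex
  have hj0j : j0 ≤ j := Nat.find_min' hex hP
  have hρR : 2 ^ j0 * r ≤ R := by
    refine le_trans ?_ hj1
    gcongr; norm_num
  have hrρ : r ≤ 2 ^ j0 * r := by
    have : (1:ℝ) ≤ 2 ^ j0 := one_le_pow₀ (by norm_num)
    nlinarith
  have hρ : 0 < 2 ^ j0 * r := by positivity
  refine ⟨2 ^ j0 * r, hρ, hρR, hrρ, ?_⟩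
  have hsub : dist x c + 2 ^ j0 * r + R ≤ 4 * R := by linarith
  have h2 := lh_half (ball x (2 ^ j0 * r)) E hEm measure_ball_lt_top.ne hPj0
  set ρ := 2 ^ j0 * r with hρd
  rcases Nat.eq_zero_or_pos j0 with h0 | h0
  · have hρr : ρ = r := by rw [hρd, h0]; simp
    rw [← hρr] at h1
    have h3 := lh_type2 u hum G hu hG c (4 * R) hw l t ht htl x ρ hρ R hR hsub h1 h2
    have h4 : volume (ball x ρ) ≤ 2 ^ (n + 3) * ENNReal.ofReal ρ *
        ((ENNReal.ofReal l)⁻¹ * ∫⁻ z in ball x ρ, ‖G z‖ₑ) := by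
      rw [← ENNReal.mul_le_mul_iff_right (a := ENNReal.ofReal (l / 2)) (by simpa using hl)
        ENNReal.ofReal_ne_top]
      refine h3.trans (le_of_eq ?_)
      have e1 : ENNReal.ofReal (2 * ρ) = 2 * ENNReal.ofReal ρ := by
        rw [ENNReal.ofReal_mul (by norm_num)]; simp
      have e2 : ENNReal.ofReal l = 2 * ENNReal.ofReal (l / 2) := by
        rw [← ENNReal.ofReal_ofNat, ← ENNReal.ofReal_mul (by norm_num)]; congr 1; ring
      have e3 : 2 * (ENNReal.ofReal (l / 2) * (ENNReal.ofReal l)⁻¹) = 1 := by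
        rw [← mul_assoc, ← e2]
        exact ENNReal.mul_inv_cancel (by simpa using hl) ENNReal.ofReal_ne_top
      calc 2 * ENNReal.ofReal (2 * ρ) * 2 ^ n * ∫⁻ z in ball x ρ, ‖G z‖ₑ
          = 2 ^ (n + 2) * ENNReal.ofReal ρ * (∫⁻ z in ball x ρ, ‖G z‖ₑ) * 1 := by rw [e1]; ring
        _ = _ := by rw [← e3]; ring
    have h5 := lh_cancel hn ρ hρ x _ _ h4
    refine h5.trans ?_
    gcongr
    · norm_num
    · omega
    · refine Filter.le_liminf_of_le (by isBoundedDefault) (Eventually.of_forall fun k => ?_)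
      · simp only [lhNu, Measure.add_apply, Measure.smul_apply, smul_eq_mul]
        rw [withDensity_apply _ measurableSet_ball]
        exact le_add_self
  · obtain ⟨i, hi⟩ : ∃ i, j0 = i + 1 := ⟨j0 - 1, by omega⟩
    have hnP : ¬ P i := Nat.find_min hex (by omega)
    have hρi : ρ = 2 * (2 ^ i * r) := by rw [hρd, hi, pow_succ]; ring
    have hip : 0 < 2 ^ i * r := by positivity
    have h3 : volume (ball x ρ) ≤ 2 ^ (n + 1) * volume (ball x ρ ∩ E) := by
      calc volume (ball x ρ) = 2 ^ n * volume (ball x (2 ^ i * r)) := by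
            rw [lh_vol x ρ hρ, lh_vol x _ hip, hρi, ENNReal.ofReal_mul (by norm_num), mul_pow]
            simp [mul_assoc]
        _ ≤ 2 ^ n * (2 * volume (ball x (2 ^ i * r) ∩ E)) := by
            gcongr; exact (not_le.1 hnP).le
        _ ≤ 2 ^ n * (2 * volume (ball x ρ ∩ E)) := by
            gcongr; linarith
        _ = _ := by ring
    have h4 := lh_type1 u hum G hu hG c (4 * R) hw C hC t ht x ρ hρ R hR hsub h3 h2
    have h5 : volume (ball x ρ) ≤ 2 ^ (2 * n + 3) * ENNReal.ofReal ρ *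
      liminf (fun k : ℕ => ENNReal.ofReal (2 * C * (k + 1)) *
        ∫⁻ z in ball x ρ ∩ {x | |(|u x| - t)| ≤ 1 / ((k : ℝ) + 1)}, ‖G z‖ₑ) atTop := by
      refine h4.trans (le_of_eq ?_)
      have e1 : ENNReal.ofReal (2 * ρ) = 2 * ENNReal.ofReal ρ := by
        rw [ENNReal.ofReal_mul (by norm_num)]; simp
      rw [e1]; ring
    refine (lh_cancel hn ρ hρ x _ _ h5).trans ?_
    gcongr
    refine liminf_le_liminf (Eventually.of_forall fun k => ?_)
    have hm : MeasurableSet {x | |(|u x| - t)| ≤ 1 / ((k : ℝ) + 1)} :=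
      measurableSet_le (hum.abs.sub measurable_const).abs measurable_const
    simp only [lhNu, Measure.add_apply, Measure.smul_apply, smul_eq_mul]
    rw [Measure.restrict_apply measurableSet_ball,
      withDensity_apply _ (measurableSet_ball.inter hm)]
    exact le_self_add

theorem lh_nu_limit {n : ℕ} (u : En n → ℝ) (hum : Measurable u) (G : En n → En n)
    (hG : Integrable G) (C : ℝ≥0) (l : ℝ) (hl : 0 < l) :
    ∃ t ∈ Ioo (l / 4) (l / 2), liminf (fun k => lhNu u G C l t k univ) atTop ≤
      (ENNReal.ofReal (16 * C) + 1) * (∫⁻ z, ‖G z‖ₑ) / ENNReal.ofReal l := by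
  set ν := (volume : Measure (En n)).withDensity fun z => ‖G z‖ₑ with hν
  have hνu : ν univ = ∫⁻ z, ‖G z‖ₑ := by rw [hν, withDensity_apply _ MeasurableSet.univ]; simp
  have : IsFiniteMeasure ν := ⟨by rw [hνu]; exact hG.2⟩
  set μ := ν.map (fun x => |u x|) with hμ
  have : IsFiniteMeasure μ := by rw [hμ]; infer_instance
  have hμu : μ univ = ν univ := by
    rw [hμ, Measure.map_apply hum.abs MeasurableSet.univ, preimage_univ]
  obtain ⟨t, ht, D, hD, hlim⟩ := lh_level μ l hl
  refine ⟨t, ht, ?_⟩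
  have hseq : Tendsto (fun k : ℕ => 1 / ((k : ℝ) + 1)) atTop (𝓝[>] 0) :=
    tendsto_nhdsWithin_iff.2 ⟨tendsto_one_div_add_atTop_nhds_zero_nat,
      Eventually.of_forall fun k => by simp only [mem_Ioi]; positivity⟩
  have h1 := hlim.comp hseq
  have h2 : ∀ k : ℕ, lhNu u G C l t k univ = ENNReal.ofReal (4 * C) *
      ((fun r => μ (closedBall t r) / volume (closedBall t r)) ∘ (fun k : ℕ => 1 / ((k : ℝ) + 1))) k
      + (ENNReal.ofReal l)⁻¹ * ν univ := by
    intro k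
    have hm : MeasurableSet {x | |(|u x| - t)| ≤ 1 / ((k : ℝ) + 1)} :=
      measurableSet_le (hum.abs.sub measurable_const).abs measurable_const
    simp only [lhNu, Measure.add_apply, Measure.smul_apply, smul_eq_mul, ← hν,
      Measure.restrict_apply MeasurableSet.univ, univ_inter, Function.comp]
    congr 1
    rw [hμ, Measure.map_apply hum.abs measurableSet_closedBall, Real.volume_closedBall]
    have e : (fun x => |u x|) ⁻¹' closedBall t (1 / ((k : ℝ) + 1)) =
        {x | |(|u x| - t)| ≤ 1 / ((k : ℝ) + 1)} := by
      ext x; simp [Real.dist_eq]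
    rw [e, ENNReal.div_eq_inv_mul, ← ENNReal.ofReal_inv_of_pos (by positivity), ← mul_assoc,
      ← ENNReal.ofReal_mul (by positivity)]
    congr 2
    field_simp; ring
  simp_rw [h2]
  have h3 := (ENNReal.Tendsto.const_mul (a := ENNReal.ofReal (4 * C)) h1
    (Or.inr ENNReal.ofReal_ne_top)).add_const ((ENNReal.ofReal l)⁻¹ * ν univ)
  rw [h3.liminf_eq, ← hνu]
  calc _ ≤ ENNReal.ofReal (4 * C) * (μ univ / ENNReal.ofReal (l / 4)) +
        (ENNReal.ofReal l)⁻¹ * ν univ := by gcongr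
    _ = _ := by
      rw [hμu, ENNReal.ofReal_div_of_pos (by norm_num)]
      have e : (ENNReal.ofReal l / ENNReal.ofReal 4)⁻¹ = ENNReal.ofReal 4 * (ENNReal.ofReal l)⁻¹ := by
        rw [ENNReal.inv_div (Or.inl (by simp)) (Or.inl (by simp)), div_eq_mul_inv]
      have e2 : ENNReal.ofReal (16 * C) = ENNReal.ofReal 4 * ENNReal.ofReal (4 * C) := by
        rw [← ENNReal.ofReal_mul (by norm_num)]; congr 1; ring
      rw [div_eq_mul_inv, e, e2, div_eq_mul_inv]
      ring

open MeasureTheory Metric Filter Set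
open scoped ENNReal Topology NNReal

theorem lh_content {n : ℕ} (hn : 1 ≤ n) (u : En n → ℝ) (hum : Measurable u) (G : En n → En n)
    (hu : Integrable u)
    (hG : Integrable G) (c : En n) (R : ℝ) (hR : 0 < R)
    (hw : HasWeakGradientOn (ball c (4 * R)) u G)
    (C : ℝ≥0) (hC : ∀ s : ℝ, ‖deriv Real.smoothTransition s‖ ≤ C) (l : ℝ) (hl : 0 < l)
    (hE : 2 * ((∫⁻ x, ‖u x‖ₑ) / ENNReal.ofReal (l / 4)) ≤ volume (ball (0 : En n) (R / 2))) :
    ∃ (s : Set (En n)) (ρ : En n → ℝ), s.Countable ∧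
      {x | dist x c ≤ R ∧ ∃ r, 0 < r ∧ r ≤ R ∧
        ENNReal.ofReal l * volume (ball x r) ≤ ∫⁻ y in ball x r, ‖u y‖ₑ} ⊆
          ⋃ x : s, closedBall (x : En n) (5 * ρ x) ∧
      ∑' x : s, ENNReal.ofReal (ρ x) ^ (n - 1) ≤
        2 ^ (2 * n + 3) / volume (ball (0 : En n) 1) *
          ((ENNReal.ofReal (16 * C) + 1) * (∫⁻ z, ‖G z‖ₑ) / ENNReal.ofReal l) := by
  obtain ⟨t, ht, hlim⟩ := lh_nu_limit u hum G hG C l hl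
  set A := {x | dist x c ≤ R ∧ ∃ r, 0 < r ∧ r ≤ R ∧
        ENNReal.ofReal l * volume (ball x r) ≤ ∫⁻ y in ball x r, ‖u y‖ₑ} with hA
  have ht0 : 0 < t := by linarith [ht.1]
  have hE2 : 2 * volume {x | t < |u x|} ≤ volume (ball (0 : En n) (R / 2)) := by
    refine le_trans ?_ hE
    gcongr
    refine le_trans ?_ (meas_ge_le_lintegral_div hum.enorm.aemeasurable (by simpa using hl)
      ENNReal.ofReal_ne_top)
    apply measure_mono
    intro x hx
    have hx : t < |u x| := hx
    simp only [mem_ofPred_eq]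
    rw [← ofReal_norm]
    apply ENNReal.ofReal_le_ofReal
    rw [Real.norm_eq_abs]; linarith [ht.1]
  have hx : ∀ x ∈ A, ∃ ρ, 0 < ρ ∧ ρ ≤ R ∧ ENNReal.ofReal ρ ^ (n - 1) ≤
      2 ^ (2 * n + 3) / volume (ball (0 : En n) 1) *
        liminf (fun k => lhNu u G C l t k (ball x ρ)) atTop := by
    rintro x ⟨hxc, r, hr, hrR, h1⟩
    obtain ⟨ρ, h2, h3, -, h4⟩ := lh_ball hn u hum G hu hG c R hR hw C hC l t ht0 ht.2.le hE2 x hxc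
      r hr hrR h1
    exact ⟨ρ, h2, h3, h4⟩
  choose! ρ hρ0 hρR hρ using hx
  obtain ⟨s, hsA, hdisj, hcov⟩ := Vitali.exists_disjoint_subfamily_covering_enlargement_closedBall
    A id ρ R hρR 5 (by norm_num)
  have hdisj2 : s.PairwiseDisjoint fun x => ball x (ρ x) := fun x hx y hy hxy =>
    (hdisj hx hy hxy).mono ball_subset_closedBall ball_subset_closedBall
  have hsc : s.Countable := hdisj2.countable_of_isOpen (fun x _ => isOpen_ball)
    (fun x hx => ⟨x, mem_ball_self (hρ0 x (hsA hx))⟩)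
  refine ⟨s, ρ, hsc, ?_, ?_⟩
  · intro x hx
    obtain ⟨y, hy, hxy⟩ := hcov x hx
    refine mem_iUnion.2 ⟨⟨y, hy⟩, hxy (mem_closedBall_self (hρ0 x hx).le)⟩
  · have : Countable s := hsc.to_subtype
    calc ∑' x : s, ENNReal.ofReal (ρ x) ^ (n - 1)
        ≤ ∑' x : s, 2 ^ (2 * n + 3) / volume (ball (0 : En n) 1) *
        liminf (fun k => lhNu u G C l t k (ball x (ρ x))) atTop :=
          ENNReal.tsum_le_tsum fun x => hρ x (hsA x.2)
      _ = 2 ^ (2 * n + 3) / volume (ball (0 : En n) 1) * ∑' x : s,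
        liminf (fun k => lhNu u G C l t k (ball x (ρ x))) atTop := ENNReal.tsum_mul_left
      _ ≤ _ := by
        gcongr
        refine le_trans (lh_tsum_liminf _) (le_trans ?_ hlim)
        refine liminf_le_liminf (Eventually.of_forall fun k => ?_)
        rw [← measure_iUnion]
        · exact measure_mono (subset_univ _)
        · intro x y hxy
          exact hdisj2 x.2 y.2 (fun h => hxy (Subtype.ext h))
        · exact fun x => measurableSet_ball

theorem lh_null_local {n : ℕ} (hn : 2 ≤ n) (u : En n → ℝ) (hum : Measurable u) (G : En n → En n)
    (hu : Integrable u)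
    (hG : Integrable G) (c : En n) (R : ℝ) (hR : 0 < R)
    (hw : HasWeakGradientOn (ball c (4 * R)) u G) :
    μH[(n : ℝ) - 1] {x | dist x c ≤ R ∧ ∀ l : ℕ, ∃ r, 0 < r ∧ r ≤ R ∧
        ENNReal.ofReal l * volume (ball x r) ≤ ∫⁻ y in ball x r, ‖u y‖ₑ} = 0 := by
  obtain ⟨C, hC⟩ := lh_S_bound
  have hn1 : (n : ℝ) - 1 = ((n - 1 : ℕ) : ℝ) := by
    rw [Nat.cast_sub (by omega)]; simp
  set q : ℕ → ℝ≥0∞ := fun l => 2 ^ (2 * n + 3) / volume (ball (0 : En n) 1) *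
          ((ENNReal.ofReal (16 * C) + 1) * (∫⁻ z, ‖G z‖ₑ) / ENNReal.ofReal l) with hq
  have hw0 : volume (ball (0 : En n) 1) ≠ 0 := lh_vol_pos 0 1 one_pos
  have hK : (2:ℝ≥0∞) ^ (2 * n + 3) / volume (ball (0 : En n) 1) ≠ ⊤ :=
    ENNReal.div_ne_top (by simp) hw0
  have hq0 : Tendsto q atTop (𝓝 0) := by
    have h1 : Tendsto (fun l : ℕ => (ENNReal.ofReal (16 * C) + 1) * (∫⁻ z, ‖G z‖ₑ) / ENNReal.ofReal l)
        atTop (𝓝 0) := by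
      simp only [ENNReal.ofReal_natCast]
      have := ENNReal.Tendsto.const_div (a := (ENNReal.ofReal (16 * C) + 1) * (∫⁻ z, ‖G z‖ₑ))
        ENNReal.tendsto_nat_nhds_top (Or.inr (ENNReal.mul_ne_top (ENNReal.add_ne_top.2 ⟨ENNReal.ofReal_ne_top, ENNReal.one_ne_top⟩) hG.2.ne))
      simpa using this
    have := ENNReal.Tendsto.const_mul (a := 2 ^ (2 * n + 3) / volume (ball (0 : En n) 1)) h1
      (Or.inr hK)
    rw [mul_zero] at this
    exact this
  have hev : ∀ᶠ l : ℕ in atTop, 0 < l ∧ 2 * ((∫⁻ x, ‖u x‖ₑ) / ENNReal.ofReal ((l:ℝ) / 4)) ≤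
      volume (ball (0 : En n) (R / 2)) := by
    have h0 : Tendsto (fun l : ℕ => ENNReal.ofReal ((l:ℝ) / 4)) atTop (𝓝 ⊤) := by
      apply ENNReal.tendsto_ofReal_atTop.comp
      exact tendsto_natCast_atTop_atTop.atTop_div_const (by norm_num)
    have h1 : Tendsto (fun l : ℕ => 2 * ((∫⁻ x, ‖u x‖ₑ) / ENNReal.ofReal ((l:ℝ) / 4))) atTop
        (𝓝 0) := by
      have := ENNReal.Tendsto.const_mul (a := 2) (ENNReal.Tendsto.const_div
        (a := ∫⁻ x, ‖u x‖ₑ) h0 (Or.inr hu.2.ne)) (Or.inr (by simp))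
      simpa using this
    filter_upwards [eventually_gt_atTop 0,
      h1.eventually_le_const (pos_iff_ne_zero.2 (lh_vol_pos (0 : En n) (R/2) (by positivity)))]
      with l h2 h3
    exact ⟨h2, h3⟩
  have hex : ∀ l : ℕ, ∃ (s : Set (En n)) (ρ : En n → ℝ), s.Countable ∧ ((0 < l ∧
      2 * ((∫⁻ x, ‖u x‖ₑ) / ENNReal.ofReal ((l:ℝ) / 4)) ≤ volume (ball (0 : En n) (R / 2))) →
      {x | dist x c ≤ R ∧ ∃ r, 0 < r ∧ r ≤ R ∧
        ENNReal.ofReal l * volume (ball x r) ≤ ∫⁻ y in ball x r, ‖u y‖ₑ} ⊆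
          ⋃ x : s, closedBall (x : En n) (5 * ρ x) ∧
      ∑' x : s, ENNReal.ofReal (ρ x) ^ (n - 1) ≤ q l) := by
    intro l
    by_cases h : (0 < l ∧
      2 * ((∫⁻ x, ‖u x‖ₑ) / ENNReal.ofReal ((l:ℝ) / 4)) ≤ volume (ball (0 : En n) (R / 2)))
    · obtain ⟨s, ρ, h1, h2⟩ := lh_content (by omega) u hum G hu hG c R hR hw C hC l
        (by exact_mod_cast h.1) h.2
      exact ⟨s, ρ, h1, fun _ => h2⟩
    · exact ⟨∅, fun _ => 0, countable_empty, fun h' => absurd h' h⟩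
  choose s ρ hs hcov using hex
  have : ∀ l, Countable (s l) := fun l => (hs l).to_subtype
  have hm1 : (((n - 1 : ℕ) : ℝ)) ≠ 0 := by
    have : n - 1 ≠ 0 := by omega
    exact_mod_cast this
  have hm2 : 0 < (((n - 1 : ℕ) : ℝ)) := lt_of_le_of_ne (by positivity) (Ne.symm hm1)
  have hdiam : ∀ l (x : s l), ediam (closedBall (x : En n) (5 * ρ l x)) ≤
      10 * ENNReal.ofReal (ρ l x) := by
    intro l x
    have e : ENNReal.ofReal (5 * ρ l x) = 5 * ENNReal.ofReal (ρ l x) := by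
      rw [ENNReal.ofReal_mul (by norm_num)]; simp
    rcases lt_or_ge (5 * ρ l x) 0 with h | h
    · rw [closedBall_eq_empty.2 h]; simp
    · rw [← Metric.closedEBall_ofReal h]
      refine ediam_closedEBall_le.trans (le_of_eq ?_)
      rw [e, ← mul_assoc]; norm_num
  set rr : ℕ → ℝ≥0∞ := fun l => 10 * q l ^ ((((n - 1 : ℕ) : ℝ))⁻¹) with hrr
  have hrr0 : Tendsto rr atTop (𝓝 0) := by
    have h1 : Tendsto (fun l => q l ^ ((((n - 1 : ℕ) : ℝ))⁻¹)) atTop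
        (𝓝 (0 ^ ((((n - 1 : ℕ) : ℝ))⁻¹))) := hq0.ennrpow_const _
    rw [ENNReal.zero_rpow_of_pos (by positivity)] at h1
    have := ENNReal.Tendsto.const_mul (a := 10) h1 (Or.inr (by simp))
    simpa using this
  have hfin := Measure.hausdorffMeasure_le_liminf_tsum ((n : ℝ) - 1) {x | dist x c ≤ R ∧ ∀ l : ℕ, ∃ r, 0 < r ∧ r ≤ R ∧
        ENNReal.ofReal l * volume (ball x r) ≤ ∫⁻ y in ball x r, ‖u y‖ₑ} rr hrr0
      (fun l (x : s l) => closedBall (x : En n) (5 * ρ l x)) ?_ ?_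
  · refine le_antisymm (hfin.trans ?_) bot_le
    have h1 : Tendsto (fun l => 10 ^ (n - 1) * q l) atTop (𝓝 0) := by
      have := ENNReal.Tendsto.const_mul (a := 10 ^ (n - 1)) hq0 (Or.inr (by simp))
      simpa using this
    rw [← h1.liminf_eq]
    refine liminf_le_liminf ?_
    filter_upwards [hev] with l hl
    refine le_trans ?_ (mul_le_mul_right (hcov l hl).2 _)
    rw [← ENNReal.tsum_mul_left]
    refine ENNReal.tsum_le_tsum fun x => ?_
    rw [hn1, ENNReal.rpow_natCast, ← mul_pow]
    gcongr
    exact hdiam l x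
  · filter_upwards [hev] with l hl x
    refine (hdiam l x).trans ?_
    simp only [hrr]
    gcongr
    rw [ENNReal.le_rpow_inv_iff hm2, ENNReal.rpow_natCast]
    exact (ENNReal.le_tsum x).trans (hcov l hl).2
  · filter_upwards [hev] with l hl
    refine Subset.trans ?_ (hcov l hl).1
    rintro x ⟨h1, h2⟩
    exact ⟨h1, h2 l⟩

open MeasureTheory Metric Filter Set
open scoped ENNReal Topology NNReal

theorem lh_test_int {n : ℕ} (Ω : Set (En n)) (u : En n → ℝ)
    (hu : ∀ K : Set (En n), K ⊆ Ω → IsCompact K → IntegrableOn u K) (η : En n → ℝ)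
    (hη : IsTest Ω η) (v : En n) : Integrable (fun x => u x * fderiv ℝ η x v) := by
  have hK := hη.2.1
  have h1 := hu _ hη.2.2 hK
  have hc : Continuous (fun x => fderiv ℝ η x v) :=
    (hη.1.continuous_fderiv (by simp)).clm_apply continuous_const
  have h2 : IntegrableOn (fun x => u x * fderiv ℝ η x v) (tsupport η) :=
    h1.mul_continuousOn hc.continuousOn hK
  refine (integrableOn_iff_integrable_of_support_subset ?_).1 h2
  intro x hx
  have : fderiv ℝ η x v ≠ 0 := fun h => hx (by simp [h])
  exact tsupport_fderiv_apply_subset ℝ v (subset_tsupport _ this)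

/-- A weak partial derivative whose modulus is dominated can be replaced by a measurable one. -/
theorem lh_fix1 {n : ℕ} (Ω : Set (En n)) (hΩ : IsOpen Ω) (u w H : En n → ℝ) (v : En n)
    (hu : ∀ K : Set (En n), K ⊆ Ω → IsCompact K → IntegrableOn u K)
    (hH : ∀ K : Set (En n), K ⊆ Ω → IsCompact K → IntegrableOn H K)
    (hwH : ∀ x, ‖w x‖ ≤ H x)
    (hw : HasWeakPartialOn Ω u w v) :
    ∃ w' : En n → ℝ, HasWeakPartialOn Ω u w' v ∧ 
      ∀ K : Set (En n), K ⊆ Ω → IsCompact K → IntegrableOn w' K := by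
  by_cases hA : ∀ η : En n → ℝ, IsTest Ω η → AEStronglyMeasurable (fun x => w x * η x)
  · refine ⟨w, hw, fun K hK hKc => ?_⟩
    have hloc : LocallyIntegrableOn w Ω := by
      intro x hx
      obtain ⟨η, h1, h2, h3, -, h5⟩ := exists_contDiff_tsupport_subset (n := ⊤) (hΩ.mem_nhds hx)
      have h6 := hA η ⟨h3, h2, h1⟩
      have hU : IsOpen {y | η y ≠ 0} := isOpen_ne_fun h3.continuous continuous_const
      have hx2 : Ω ∩ {y | η y ≠ 0} ∈ 𝓝 x :=
        (hΩ.inter hU).mem_nhds ⟨hx, by rw [mem_ofPred_eq, h5]; norm_num⟩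
      obtain ⟨ε, hε, hsub⟩ := Metric.nhds_basis_closedBall.mem_iff.1 hx2
      refine ⟨closedBall x ε, mem_nhdsWithin_of_mem_nhds (closedBall_mem_nhds x hε), ?_⟩
      have hm : AEStronglyMeasurable w (volume.restrict (closedBall x ε)) := by
        have : AEStronglyMeasurable (fun y => (w y * η y) * (η y)⁻¹)
            (volume.restrict (closedBall x ε)) :=
          h6.restrict.mul (h3.continuous.measurable.inv.aestronglyMeasurable)
        refine this.congr ?_
        filter_upwards [ae_restrict_mem measurableSet_closedBall] with y hy
        have : η y ≠ 0 := (hsub hy).2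
        field_simp
      exact (hH _ (hsub.trans inter_subset_left) (isCompact_closedBall x ε)).mono' hm
        (Eventually.of_forall hwH)
    exact hloc.integrableOn_compact_subset hK hKc
  · push Not at hA
    obtain ⟨η0, hη0, hnm⟩ := hA
    have hz : ∀ η : En n → ℝ, ¬ AEStronglyMeasurable (fun x => w x * η x) → ∫ x, w x * η x = 0 := by
      intro η h
      exact integral_undef fun h' => h h'.1
    refine ⟨fun _ => 0, fun η hη => ?_, fun K _ _ => integrableOn_zero⟩
    simp only [zero_mul, integral_zero, neg_zero]
    by_cases hm : AEStronglyMeasurable (fun x => w x * η x)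
    · have hs : IsTest Ω (fun x => η x + η0 x) :=
        ⟨hη.1.add hη0.1, hη.2.1.add hη0.2.1,
          (tsupport_add η η0).trans (union_subset hη.2.2 hη0.2.2)⟩
      have hnm2 : ¬ AEStronglyMeasurable (fun x => w x * (η x + η0 x)) := by
        intro h
        apply hnm
        refine (h.sub hm).congr (Eventually.of_forall fun x => ?_)
        simp only [Pi.sub_apply]; ring
      have e1 := hw _ hs
      have e2 := hw _ hη0
      rw [hz _ hnm2] at e1
      rw [hz _ hnm] at e2
      have e3 : (fun x => u x * fderiv ℝ (fun x => η x + η0 x) x v) =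
          fun x => u x * fderiv ℝ η x v + u x * fderiv ℝ η0 x v := by
        funext x
        rw [fderiv_fun_add ((hη.1.differentiable (by simp)) x) ((hη0.1.differentiable (by simp)) x)]
        simp [mul_add]
      rw [e3, integral_add (lh_test_int Ω u hu η hη v) (lh_test_int Ω u hu η0 hη0 v), e2] at e1
      simpa using e1
    · rw [hw η hη, hz η hm, neg_zero]

theorem lh_fix {n : ℕ} (Ω : Set (En n)) (hΩ : IsOpen Ω) (u : En n → ℝ) (H : En n → En n)
    (hu : ∀ K : Set (En n), K ⊆ Ω → IsCompact K → IntegrableOn u K)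
    (hH : ∀ K : Set (En n), K ⊆ Ω → IsCompact K → IntegrableOn (fun x => ‖H x‖) K)
    (hw : HasWeakGradientOn Ω u H) :
    ∃ H' : En n → En n, HasWeakGradientOn Ω u H' ∧ 
      ∀ K : Set (En n), K ⊆ Ω → IsCompact K → IntegrableOn H' K := by
  have := fun j => lh_fix1 Ω hΩ u (fun x => H x j) (fun x => ‖H x‖) (EuclideanSpace.single j 1) hu
    hH (fun x => PiLp.norm_apply_le (H x) j) (hw j)
  choose w' h1 h2 using this
  refine ⟨fun x => WithLp.toLp 2 (fun j => w' j x), fun j => h1 j, fun K hK hKc => ?_⟩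
  exact Integrable.of_eval_piLp fun j => h2 j K hK hKc

theorem lh_localize {n : ℕ} (Ω : Set (En n)) (u : En n → ℝ) (H : En n → En n)
    (hum : AEStronglyMeasurable u)
    (hw : HasWeakGradientOn Ω u H) (c : En n) (S : ℝ) (hS : closedBall c S ⊆ Ω)
    (hu : IntegrableOn u (closedBall c S)) (hH : IntegrableOn H (closedBall c S)) :
    ∃ u' : En n → ℝ, Measurable u' ∧ Integrable u' ∧
      u' =ᵐ[volume] (closedBall c S).indicator u ∧
      Integrable ((closedBall c S).indicator H) ∧
      HasWeakGradientOn (ball c S) u' ((closedBall c S).indicator H) := by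
  have hK : MeasurableSet (closedBall c S) := measurableSet_closedBall
  have hae : (closedBall c S).indicator (hum.mk u) =ᵐ[volume] (closedBall c S).indicator u := by
    filter_upwards [hum.ae_eq_mk] with x hx
    simp only [indicator]; rw [hx]
  refine ⟨(closedBall c S).indicator (hum.mk u), hum.stronglyMeasurable_mk.measurable.indicator hK,
    ?_, hae, hH.integrable_indicator hK, ?_⟩
  · exact (hu.integrable_indicator hK).congr hae.symm
  · intro i η hη
    have hη2 : IsTest Ω η := ⟨hη.1, hη.2.1, hη.2.2.trans (ball_subset_closedBall.trans hS)⟩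
    have e1 := hw i η hη2
    have e2 : ∫ x, (closedBall c S).indicator (hum.mk u) x * fderiv ℝ η x (EuclideanSpace.single i 1)
        = ∫ x, u x * fderiv ℝ η x (EuclideanSpace.single i 1) := by
      apply integral_congr_ae
      filter_upwards [hae] with x hx
      rw [hx]
      by_cases h : x ∈ closedBall c S
      · rw [indicator_of_mem h]
      · have : fderiv ℝ η x (EuclideanSpace.single i 1) = 0 := by
          by_contra h0
          exact h (ball_subset_closedBall (hη.2.2
            (tsupport_fderiv_apply_subset ℝ _ (subset_tsupport _ h0))))
        rw [this]; simp
    rw [e2, e1]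
    congr 1
    apply integral_congr_ae
    refine Eventually.of_forall fun x => ?_
    dsimp only
    by_cases h : x ∈ closedBall c S
    · rw [indicator_of_mem h]
    · have : η x = 0 := by
        by_contra h0
        exact h (ball_subset_closedBall (hη.2.2 (subset_tsupport _ h0)))
      rw [this]; simp

open MeasureTheory Metric Filter Set
open scoped ENNReal Topology NNReal

theorem lh_enorm_le {n : ℕ} (x : En n) : ‖x‖ₑ ≤ ∑ i, ‖x i‖ₑ := by
  have h := (EuclideanSpace.basisFun (Fin n) ℝ).sum_repr x
  conv_lhs => rw [← h]
  refine (enorm_sum_le _ _).trans (Finset.sum_le_sum fun i _ => ?_)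
  have e : ‖(EuclideanSpace.single i (1:ℝ) : En n)‖ₑ = 1 := by rw [← ofReal_norm]; simp
  rw [enorm_smul]
  simp [e]

theorem lh_loc1 {n : ℕ} (Ω : Set (En n)) (f : En n → ℝ) (g : En n → En n)
    (h : En n → Fin n → En n) (hf : MemW2pLoc 1 Ω f g h) (K : Set (En n)) (hK : K ⊆ Ω)
    (hKc : IsCompact K) : IntegrableOn f K ∧ IntegrableOn g K := by
  obtain ⟨h1, h2, -, -, h5⟩ := hf
  obtain ⟨h6, h7, -⟩ := h5 K hK hKc
  simp only [Real.rpow_one] at h6 h7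
  constructor
  · exact (integrable_norm_iff h1.restrict).1 h6
  · exact (integrable_norm_iff h2.restrict).1 h7

theorem lh_null {n : ℕ} (hn : 2 ≤ n) (Ω : Set (En n)) (hΩ : IsOpen Ω) (f : En n → ℝ)
    (g : En n → En n)
    (h : En n → Fin n → En n) (hf : MemW2pLoc 1 Ω f g h) :
    μH[(n : ℝ) - 1] {x | x ∈ Ω ∧ ∀ k : ℕ, ∃ r : ℝ, 0 < r ∧ r < 1 / ((k : ℝ) + 1) ∧
      ((k : ℝ≥0∞) + 1) * ENNReal.ofReal r ^ n < ∫⁻ y in ball x r, ‖g y‖ₑ} = 0 := by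
  apply measure_null_of_locally_null
  rintro x0 ⟨hx0, -⟩
  have hgi : ∀ i, ∀ K : Set (En n), K ⊆ Ω → IsCompact K → IntegrableOn (fun x => g x i) K := by
    intro i K hK hKc
    exact Integrable.eval_piLp (lh_loc1 Ω f g h hf K hK hKc).2 i
  obtain ⟨ε, hε, hball⟩ := Metric.nhds_basis_closedBall.mem_iff.1 (hΩ.mem_nhds hx0)
  obtain ⟨R, hR, hRε⟩ : ∃ R, 0 < R ∧ 4 * R = ε := ⟨ε / 4, by positivity, by ring⟩
  rw [← hRε] at hball
  have hloc : ∀ i : Fin n, ∃ u' : En n → ℝ, 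
      u' =ᵐ[volume] (closedBall x0 (4 * R)).indicator (fun x => g x i) ∧
      μH[(n : ℝ) - 1] {x | dist x x0 ≤ R ∧ ∀ l : ℕ, ∃ r, 0 < r ∧ r ≤ R ∧
        ENNReal.ofReal l * volume (ball x r) ≤ ∫⁻ y in ball x r, ‖u' y‖ₑ} = 0 := by
    intro i
    obtain ⟨H', h1, h2⟩ := lh_fix Ω hΩ (fun x => g x i) (fun x => h x i) (hgi i) (fun K hK hKc => by
      have := (hf.2.2.2.2 K hK hKc).2.2 i
      simpa only [Real.rpow_one] using this) (hf.2.2.2.1 i)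
    have hgm : AEStronglyMeasurable (fun x => g x i) volume :=
      (EuclideanSpace.proj (𝕜 := ℝ) i).continuous.comp_aestronglyMeasurable hf.2.1
    obtain ⟨u', a1, a2, a3, a4, a5⟩ := lh_localize Ω (fun x => g x i) H' hgm h1 x0 (4 * R) hball
      (hgi i _ hball (isCompact_closedBall _ _)) (h2 _ hball (isCompact_closedBall _ _))
    exact ⟨u', a3, lh_null_local hn u' a1 _ a2 a4 x0 R hR a5⟩
  choose u' hu1 hu2 using hloc
  refine ⟨_, inter_mem_nhdsWithin _ (ball_mem_nhds x0 hR), ?_⟩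
  refine measure_mono_null ?_ (measure_iUnion_null hu2)
  rintro x ⟨⟨-, hx⟩, hxR⟩
  have hxR : dist x x0 < R := hxR
  by_contra hcon
  simp only [mem_iUnion, not_exists, mem_ofPred_eq, not_and] at hcon
  have hcon2 : ∀ i, ∃ l : ℕ, ∀ r, 0 < r → r ≤ R →
      ∫⁻ y in ball x r, ‖u' i y‖ₑ < ENNReal.ofReal l * volume (ball x r) := by
    intro i
    have := hcon i hxR.le
    push Not at this
    exact this
  choose l hl using hcon2
  set L := ∑ i, l i with hL
  have hlL : ∀ i, l i ≤ L := fun i => Finset.single_le_sum (f := l) (fun _ _ => Nat.zero_le _)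
    (Finset.mem_univ i)
  set ω := volume (ball (0 : En n) 1) with hω
  have hωt : ω ≠ ⊤ := measure_ball_lt_top.ne
  obtain ⟨k1, hk1⟩ := ENNReal.exists_nat_gt (r := n * (L * ω))
    (ENNReal.mul_ne_top (by simp) (ENNReal.mul_ne_top (by simp) hωt))
  obtain ⟨k2, hk2⟩ := exists_nat_one_div_lt hR
  obtain ⟨r, hr0, hr1, hr2⟩ := hx (max k1 k2)
  have hrR : r ≤ R := by
    refine hr1.le.trans (le_trans ?_ hk2.le)
    apply one_div_le_one_div_of_le (by positivity)
    have : (k2 : ℝ) ≤ (max k1 k2 : ℕ) := by exact_mod_cast le_max_right k1 k2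
    linarith
  have hsub : ball x r ⊆ closedBall x0 (4 * R) := by
    intro y hy
    rw [mem_closedBall]
    have := dist_triangle y x x0
    rw [mem_ball] at hy
    linarith
  have key : ∫⁻ y in ball x r, ‖g y‖ₑ ≤ n * (L * (ENNReal.ofReal r ^ n * ω)) := by
    calc ∫⁻ y in ball x r, ‖g y‖ₑ ≤ ∫⁻ y in ball x r, ∑ i, ‖g y i‖ₑ :=
          lintegral_mono fun y => lh_enorm_le _
      _ = ∑ i, ∫⁻ y in ball x r, ‖g y i‖ₑ := by
          apply lintegral_finsetSum'
          intro i _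
          exact ((EuclideanSpace.proj (𝕜 := ℝ) i).continuous.comp_aestronglyMeasurable
            hf.2.1).restrict.enorm
      _ ≤ ∑ i : Fin n, L * (ENNReal.ofReal r ^ n * ω) := by
          refine Finset.sum_le_sum fun i _ => ?_
          have e : ∫⁻ y in ball x r, ‖g y i‖ₑ = ∫⁻ y in ball x r, ‖u' i y‖ₑ := by
            apply lintegral_congr_ae
            filter_upwards [ae_restrict_of_ae (hu1 i), ae_restrict_mem measurableSet_ball]
              with y hy hy2
            rw [hy, indicator_of_mem (hsub hy2)]
          rw [e]
          refine (hl i r hr0 hrR).le.trans ?_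
          rw [lh_vol x r hr0, ENNReal.ofReal_natCast]
          gcongr
          exact hlL i
      _ = _ := by simp
  refine absurd hr2 (not_lt.2 (key.trans ?_))
  calc n * (L * (ENNReal.ofReal r ^ n * ω)) = n * (L * ω) * ENNReal.ofReal r ^ n := by ring
    _ ≤ _ := by
      gcongr
      refine hk1.le.trans ?_
      have : (k1 : ℝ≥0∞) ≤ (max k1 k2 : ℕ) := by exact_mod_cast le_max_left k1 k2
      exact this.trans le_self_add

open MeasureTheory Metric Filter Set
open scoped ENNReal Topology NNReal

theorem lh_avg {n : ℕ} (f : En n → ℝ) (A A' : Set (En n)) (hA : IntegrableOn f A)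
    (hA' : IntegrableOn f A') (h0 : volume A ≠ 0) (ht : volume A ≠ ⊤) (h0' : volume A' ≠ 0)
    (ht' : volume A' ≠ ⊤) :
    volume A * volume A' * ‖(⨍ y in A, f y) - (⨍ y in A', f y)‖ₑ ≤
      ∫⁻ x in A, ∫⁻ y in A', ‖f x - f y‖ₑ := by
  have e : (volume.real A * volume.real A') * ((⨍ y in A, f y) - (⨍ y in A', f y)) =
      ∫ x in A, ∫ y in A', (f x - f y) := by
    have h1 : ∀ x, ∫ y in A', (f x - f y) = volume.real A' * f x - ∫ y in A', f y := by
      intro x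
      have : IsFiniteMeasure (volume.restrict A') := ⟨by simpa using ht'.lt_top⟩
      rw [integral_sub (integrable_const _) hA']
      simp [measureReal_def]
    have : IsFiniteMeasure (volume.restrict A) := ⟨by simpa using ht.lt_top⟩
    simp_rw [h1]
    rw [integral_sub (hA.const_mul _) (integrable_const _), integral_const_mul, setAverage_eq,
      setAverage_eq]
    have a0 : volume.real A ≠ 0 := by simp [measureReal_def, ENNReal.toReal_eq_zero_iff, h0, ht]
    have a0' : volume.real A' ≠ 0 := by simp [measureReal_def, ENNReal.toReal_eq_zero_iff, h0', ht']
    simp only [smul_eq_mul, integral_const, measureReal_restrict_apply_univ]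
    field_simp
  have e2 : volume A * volume A' * ‖(⨍ y in A, f y) - (⨍ y in A', f y)‖ₑ =
      ‖∫ x in A, ∫ y in A', (f x - f y)‖ₑ := by
    rw [← e, enorm_mul, enorm_mul]
    congr 2
    · rw [← ofReal_norm, Real.norm_of_nonneg measureReal_nonneg, ofReal_measureReal ht]
    · rw [← ofReal_norm, Real.norm_of_nonneg measureReal_nonneg, ofReal_measureReal ht']
  rw [e2]
  refine (enorm_integral_le_lintegral_enorm _).trans (lintegral_mono fun x => ?_)
  exact enorm_integral_le_lintegral_enorm _

theorem lh_poinc_loc {n : ℕ} (Ω : Set (En n)) (f : En n → ℝ) (g : En n → En n)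
    (h : En n → Fin n → En n) (hf : MemW2pLoc 1 Ω f g h) (x : En n) (ρ : ℝ) (hρ : 0 < ρ)
    (hs : closedBall x (2 * ρ) ⊆ Ω) :
    ∫⁻ y in ball x ρ, ∫⁻ z in ball x ρ, ‖f y - f z‖ₑ ≤
      ENNReal.ofReal (2 * ρ) * (2 ^ n * volume (ball x ρ) * ∫⁻ z in ball x ρ, ‖g z‖ₑ) := by
  obtain ⟨i1, i2⟩ := lh_loc1 Ω f g h hf _ hs (isCompact_closedBall _ _)
  obtain ⟨u, a1, a2, a3, a4, a5⟩ := lh_localize Ω f g hf.1 hf.2.2.1 x (2 * ρ) hs i1 i2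
  have hP := lh_poinc u _ a2 a4 x (2 * ρ) a5 id contDiff_id 1 (by simp) x ρ ρ hρ
    (by rw [dist_self]; linarith)
  simp only [id, deriv_id, enorm_one, one_mul] at hP
  have hsub : ball x ρ ⊆ closedBall x (2 * ρ) :=
    ball_subset_closedBall.trans (closedBall_subset_closedBall (by linarith))
  have hae : ∀ᵐ y ∂(volume.restrict (ball x ρ)), u y = f y := by
    filter_upwards [ae_restrict_of_ae a3, ae_restrict_mem measurableSet_ball] with y h1 h2
    rw [h1, indicator_of_mem (hsub h2)]
  have e1 : ∫⁻ y in ball x ρ, ∫⁻ z in ball x ρ, ‖f y - f z‖ₑ =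
      ∫⁻ y in ball x ρ, ∫⁻ z in ball x ρ, ‖u y - u z‖ₑ := by
    apply lintegral_congr_ae
    filter_upwards [hae] with y hy
    apply lintegral_congr_ae
    filter_upwards [hae] with z hz
    rw [hy, hz]
  have e2 : ∫⁻ z in ball x ρ, ‖g z‖ₑ =
      ∫⁻ z in ball x ρ, ‖(closedBall x (2 * ρ)).indicator g z‖ₑ := by
    apply setLIntegral_congr_fun measurableSet_ball
    intro z hz
    dsimp only
    rw [indicator_of_mem (hsub hz)]
  rw [e1, e2]
  exact hP

theorem lh_cmp {n : ℕ} (Ω : Set (En n)) (f : En n → ℝ) (g : En n → En n)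
    (h : En n → Fin n → En n) (hf : MemW2pLoc 1 Ω f g h) (M : ℝ≥0) :
    ∃ C : ℝ, 0 ≤ C ∧ ∀ (x : En n) (ρ : ℝ), 0 < ρ → closedBall x (2 * ρ) ⊆ Ω → 
      ∫⁻ z in ball x ρ, ‖g z‖ₑ ≤ M * ENNReal.ofReal ρ ^ n → 
      ∀ (y : En n) (ρ' : ℝ), ρ / 2 ≤ ρ' → ball y ρ' ⊆ ball x ρ → 
      |ballAvg f y ρ' - ballAvg f x ρ| ≤ C * ρ := by
  set ω := volume (ball (0 : En n) 1) with hω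
  have hω0 : ω ≠ 0 := lh_vol_pos 0 1 one_pos
  have hωt : ω ≠ ⊤ := measure_ball_lt_top.ne
  set C' : ℝ≥0∞ := 2 * 2 ^ n * 2 ^ n * M / ω with hC'
  have hC't : C' ≠ ⊤ := ENNReal.div_ne_top
    (ENNReal.mul_ne_top (ENNReal.mul_ne_top (ENNReal.mul_ne_top (by simp) (by simp)) (by simp))
      (by simp)) hω0
  refine ⟨C'.toReal, ENNReal.toReal_nonneg, ?_⟩
  intro x ρ hρ hs hM y ρ' hρ' hsub
  have hρ'0 : 0 < ρ' := by linarith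
  have hsub2 : ball x ρ ⊆ closedBall x (2 * ρ) :=
    ball_subset_closedBall.trans (closedBall_subset_closedBall (by linarith))
  have i1 := (lh_loc1 Ω f g h hf _ hs (isCompact_closedBall _ _)).1.mono_set hsub2
  have h1 := lh_avg f (ball y ρ') (ball x ρ) (i1.mono_set hsub) i1 (lh_vol_pos y ρ' hρ'0)
    measure_ball_lt_top.ne (lh_vol_pos x ρ hρ) measure_ball_lt_top.ne
  have h2 := h1.trans ((lintegral_mono_set hsub).trans (lh_poinc_loc Ω f g h hf x ρ hρ hs))
  have hv : volume (ball x ρ) ≤ 2 ^ n * volume (ball y ρ') := by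
    rw [lh_vol x ρ hρ, lh_vol y ρ' hρ'0, ← mul_assoc, ← mul_pow]
    gcongr
    rw [← ENNReal.ofReal_ofNat, ← ENNReal.ofReal_mul (by norm_num)]
    exact ENNReal.ofReal_le_ofReal (by linarith)
  set a := (⨍ z in ball y ρ', f z) - (⨍ z in ball x ρ, f z) with ha
  have hB0 := lh_vol_pos x ρ hρ
  have hBt : volume (ball x ρ) ≠ ⊤ := measure_ball_lt_top.ne
  have hr0 : ENNReal.ofReal ρ ^ n ≠ 0 := pow_ne_zero _ (by simpa using hρ)
  have hrt : ENNReal.ofReal ρ ^ n ≠ ⊤ := ENNReal.pow_ne_top ENNReal.ofReal_ne_top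
  have h3 : volume (ball x ρ) * (ENNReal.ofReal ρ ^ n * (ω * ‖a‖ₑ)) ≤
      volume (ball x ρ) * (ENNReal.ofReal ρ ^ n * (2 * 2 ^ n * 2 ^ n * M * ENNReal.ofReal ρ)) := by
    calc volume (ball x ρ) * (ENNReal.ofReal ρ ^ n * (ω * ‖a‖ₑ))
        = volume (ball x ρ) * volume (ball x ρ) * ‖a‖ₑ := by
          nth_rewrite 3 [lh_vol x ρ hρ]; ring
      _ ≤ (2 ^ n * volume (ball y ρ')) * volume (ball x ρ) * ‖a‖ₑ := by gcongr
      _ = 2 ^ n * (volume (ball y ρ') * volume (ball x ρ) * ‖a‖ₑ) := by ring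
      _ ≤ 2 ^ n * (ENNReal.ofReal (2 * ρ) * (2 ^ n * volume (ball x ρ) *
            (M * ENNReal.ofReal ρ ^ n))) := by
          refine mul_le_mul_right (h2.trans ?_) _
          gcongr
      _ = _ := by
          rw [ENNReal.ofReal_mul (by norm_num), ENNReal.ofReal_ofNat]; ring
  have h4 := (ENNReal.mul_le_mul_iff_right hr0 hrt).1 ((ENNReal.mul_le_mul_iff_right hB0 hBt).1 h3)
  have h5 : ‖a‖ₑ ≤ C' * ENNReal.ofReal ρ := by
    rw [mul_comm, ← ENNReal.le_div_iff_mul_le (Or.inl hω0) (Or.inl hωt)] at h4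
    refine h4.trans (le_of_eq ?_)
    rw [hC', div_eq_mul_inv, div_eq_mul_inv]; ring
  have h6 := ENNReal.toReal_mono (ENNReal.mul_ne_top hC't ENNReal.ofReal_ne_top) h5
  rw [toReal_enorm, ENNReal.toReal_mul, ENNReal.toReal_ofReal hρ.le] at h6
  exact h6

/-- Telescoping. -/
theorem lh_tele (a : ℝ → ℝ) (C δ : ℝ) (hC : 0 ≤ C)
    (ha : ∀ ρ ρ', 0 < ρ → ρ < δ → ρ / 2 ≤ ρ' → ρ' ≤ ρ → |a ρ' - a ρ| ≤ C * ρ) :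
    ∀ ρ ρ', 0 < ρ' → ρ' ≤ ρ → ρ < δ → |a ρ' - a ρ| ≤ 2 * C * ρ := by
  have key : ∀ j : ℕ, ∀ ρ ρ', 0 < ρ' → ρ' ≤ ρ → ρ < δ → ρ ≤ 2 ^ j * ρ' →
      |a ρ' - a ρ| ≤ 2 * C * ρ := by
    intro j
    induction j with
    | zero =>
      intro ρ ρ' h1 h2 h3 h4
      have : ρ' = ρ := by linarith
      rw [this]; simp
      have : 0 < ρ := by linarith
      positivity
    | succ j ih =>
      intro ρ ρ' h1 h2 h3 h4
      have h0 : 0 < ρ := by linarith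
      have hCρ : 0 ≤ C * ρ := by positivity
      by_cases h5 : ρ / 2 ≤ ρ'
      · linarith [ha ρ ρ' h0 h3 h5 h2]
      · push Not at h5
        have h6 := ih (ρ / 2) ρ' h1 h5.le (by linarith) (by rw [pow_succ] at h4; linarith)
        have h7 := ha ρ (ρ / 2) h0 h3 le_rfl (by linarith)
        have := abs_sub_le (a ρ') (a (ρ / 2)) (a ρ)
        linarith
  intro ρ ρ' h1 h2 h3
  obtain ⟨j, hj⟩ := pow_unbounded_of_one_lt (ρ / ρ') (one_lt_two : (1:ℝ) < 2)
  rw [div_lt_iff₀ h1] at hj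
  exact key j ρ ρ' h1 h2 h3 hj.le

theorem lh_limit (a : ℝ → ℝ) (C δ : ℝ) (hC : 0 ≤ C) (hδ : 0 < δ)
    (ha : ∀ ρ ρ', 0 < ρ' → ρ' ≤ ρ → ρ < δ → |a ρ' - a ρ| ≤ C * ρ) :
    ∃ L, Tendsto a (𝓝[>] 0) (𝓝 L) := by
  apply cauchy_map_iff_exists_tendsto.1
  rw [Metric.cauchy_iff]
  refine ⟨inferInstance, fun ε hε => ?_⟩
  set ρ := min (δ / 2) (ε / (4 * (C + 1))) with hρ
  have hρ0 : 0 < ρ := by positivity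
  have hρδ : ρ < δ := by have := min_le_left (δ / 2) (ε / (4 * (C + 1))); linarith
  have hρε : C * ρ < ε / 2 := by
    have h1 : ρ ≤ ε / (4 * (C + 1)) := min_le_right _ _
    rw [le_div_iff₀ (by positivity)] at h1
    nlinarith
  refine ⟨a '' Ioc 0 ρ, image_mem_map (Ioc_mem_nhdsGT hρ0), ?_⟩
  rintro _ ⟨r, hr, rfl⟩ _ ⟨s, hs, rfl⟩
  have h1 := ha ρ r hr.1 hr.2 hρδ
  have h2 := ha ρ s hs.1 hs.2 hρδ
  rw [abs_sub_comm] at h2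
  rw [Real.dist_eq]
  have := abs_sub_le (a r) (a ρ) (a s)
  linarith

theorem lh_prec {n : ℕ} (f : En n → ℝ) (x : En n) (C δ : ℝ) (hC : 0 ≤ C) (hδ : 0 < δ)
    (ha : ∀ ρ ρ', 0 < ρ' → ρ' ≤ ρ → ρ < δ → |ballAvg f x ρ' - ballAvg f x ρ| ≤ C * ρ) :
    ∀ ρ, 0 < ρ → ρ < δ → |preciseRep f x - ballAvg f x ρ| ≤ C * ρ := by
  have hex := lh_limit (fun r => ballAvg f x r) C δ hC hδ ha
  have hlim : Tendsto (fun r => ballAvg f x r) (𝓝[>] 0) (𝓝 (preciseRep f x)) := by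
    unfold preciseRep
    rw [dif_pos hex]
    exact hex.choose_spec
  intro ρ h0 h1
  have h2 : Tendsto (fun r => |ballAvg f x r - ballAvg f x ρ|) (𝓝[>] 0)
      (𝓝 (|preciseRep f x - ballAvg f x ρ|)) := (hlim.sub_const _).abs
  refine le_of_tendsto h2 ?_
  filter_upwards [Ioc_mem_nhdsGT h0] with r hr
  exact ha ρ r hr.1 hr.2 h1

theorem lh_lip {X : Type*} [PseudoMetricSpace X] (s : Set X) (hs : IsCompact s) (F : X → ℝ) (C δ : ℝ) (hC : 0 ≤ C)
    (hδ : 0 < δ) (h : ∀ x ∈ s, ∀ y ∈ s, dist x y < δ → |F x - F y| ≤ C * dist x y) :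
    ∃ K : ℝ≥0, LipschitzOnWith K F s := by
  have hc : ContinuousOn F s := by
    rw [Metric.continuousOn_iff]
    intro b hb ε hε
    refine ⟨min δ (ε / (C + 1)), by positivity, fun a ha hab => ?_⟩
    have h1 := h a ha b hb (hab.trans_le (min_le_left _ _))
    have h2 := hab.trans_le (min_le_right _ _)
    rw [lt_div_iff₀ (by positivity)] at h2
    rw [Real.dist_eq]
    have := dist_nonneg (x := a) (y := b)
    nlinarith
  obtain ⟨b, hb⟩ := hs.exists_bound_of_continuousOn hc
  refine ⟨(max C (2 * b / δ)).toNNReal, LipschitzOnWith.of_dist_le_mul fun x hx y hy => ?_⟩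
  rw [Real.coe_toNNReal _ (le_max_of_le_left hC), Real.dist_eq]
  rcases lt_or_ge (dist x y) δ with hd | hd
  · refine (h x hx y hy hd).trans ?_
    gcongr
    exact le_max_left _ _
  · have h1 := hb x hx
    have h2 := hb y hy
    have hb0 : 0 ≤ b := (norm_nonneg _).trans h1
    rw [Real.norm_eq_abs] at h1 h2
    have h3 : |F x - F y| ≤ 2 * b := by
      have := abs_sub (F x) (F y)
      linarith
    calc |F x - F y| ≤ 2 * b := h3
      _ = 2 * b / δ * δ := by field_simp
      _ ≤ 2 * b / δ * dist x y := by gcongr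
      _ ≤ _ := by gcongr; exact le_max_right _ _

open MeasureTheory Metric Filter Set
open scoped ENNReal Topology NNReal

def lhT {n : ℕ} (Ω : Set (En n)) (g : En n → En n) (k : ℕ) : Set (En n) :=
  {x | ‖x‖ ≤ k ∧ ball x (3 / ((k : ℝ) + 1)) ⊆ Ω ∧ ∀ r, 0 < r → r < 1 / ((k : ℝ) + 1) →
    ∫⁻ y in ball x r, ‖g y‖ₑ ≤ ((k : ℝ≥0∞) + 1) * ENNReal.ofReal r ^ n}

theorem lh_closed1 {n : ℕ} (g : En n → En n) (r : ℝ) (c : ℝ≥0∞) :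
    IsClosed {x : En n | ∫⁻ y in ball x r, ‖g y‖ₑ ≤ c} := by
  apply isClosed_of_closure_subset
  intro x hx
  rw [Metric.mem_closure_iff] at hx
  have h1 : ∀ s, s < r → ∫⁻ y in ball x s, ‖g y‖ₑ ≤ c := by
    intro s hs
    obtain ⟨x', hx', hd⟩ := hx (r - s) (by linarith)
    refine le_trans (lintegral_mono_set ?_) hx'
    intro y hy
    rw [mem_ball] at hy ⊢
    have := dist_triangle y x x'
    linarith
  have hu : ball x r = ⋃ m : ℕ, ball x (r - 1 / ((m : ℝ) + 1)) := by
    ext y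
    simp only [mem_iUnion, mem_ball]
    constructor
    · intro hy
      obtain ⟨m, hm⟩ := exists_nat_one_div_lt (sub_pos.2 hy)
      exact ⟨m, by linarith⟩
    · rintro ⟨m, hm⟩
      have : (0:ℝ) < 1 / ((m : ℝ) + 1) := by positivity
      linarith
  have hmono : Monotone fun m : ℕ => ball x (r - 1 / ((m : ℝ) + 1)) := by
    intro a b hab
    apply ball_subset_ball
    have : 1 / ((b : ℝ) + 1) ≤ 1 / ((a : ℝ) + 1) := Nat.one_div_le_one_div hab
    linarith
  have h2 : ((volume : Measure (En n)).withDensity fun y => ‖g y‖ₑ) (ball x r) ≤ c := by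
    rw [hu, hmono.measure_iUnion]
    refine iSup_le fun m => ?_
    rw [withDensity_apply _ measurableSet_ball]
    apply h1
    have : (0:ℝ) < 1 / ((m : ℝ) + 1) := by positivity
    linarith
  rw [withDensity_apply _ measurableSet_ball] at h2
  exact h2

theorem lhT_closed {n : ℕ} (Ω : Set (En n)) (g : En n → En n) (k : ℕ) : IsClosed (lhT Ω g k) := by
  have e : lhT Ω g k = {x | ‖x‖ ≤ k} ∩ ({x | ball x (3 / ((k : ℝ) + 1)) ⊆ Ω} ∩
    ⋂ (r : ℝ) (_ : 0 < r) (_ : r < 1 / ((k : ℝ) + 1)),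
      {x | ∫⁻ y in ball x r, ‖g y‖ₑ ≤ ((k : ℝ≥0∞) + 1) * ENNReal.ofReal r ^ n}) := by
    ext x
    simp [lhT]
  rw [e]
  refine (isClosed_le continuous_norm continuous_const).inter (IsClosed.inter ?_ ?_)
  · apply isClosed_of_closure_subset
    intro x hx y hy
    rw [Metric.mem_closure_iff] at hx
    rw [mem_ball] at hy
    obtain ⟨x', hx', hd⟩ := hx (3 / ((k : ℝ) + 1) - dist y x) (by linarith)
    apply hx'
    rw [mem_ball]
    have := dist_triangle y x x'
    linarith
  · exact isClosed_iInter fun r => isClosed_iInter fun _ => isClosed_iInter fun _ => lh_closed1 g r _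

theorem lhT_compact {n : ℕ} (Ω : Set (En n)) (g : En n → En n) (k : ℕ) : IsCompact (lhT Ω g k) := by
  refine (isCompact_closedBall (0 : En n) k).of_isClosed_subset (lhT_closed Ω g k) ?_
  intro x hx
  simpa using hx.1

theorem lhT_mono {n : ℕ} (Ω : Set (En n)) (g : En n → En n) : Monotone (lhT Ω g) := by
  intro a b hab x hx
  have h1 : (a : ℝ) ≤ b := by exact_mod_cast hab
  have h2 : (a : ℝ≥0∞) ≤ b := by exact_mod_cast hab
  have h3 : 1 / ((b : ℝ) + 1) ≤ 1 / ((a : ℝ) + 1) := Nat.one_div_le_one_div hab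
  refine ⟨hx.1.trans h1, (ball_subset_ball ?_).trans hx.2.1, fun r hr hr2 => ?_⟩
  · gcongr
  · refine (hx.2.2 r hr (hr2.trans_le h3)).trans ?_
    gcongr

theorem lhT_null {n : ℕ} (hn : 2 ≤ n) (Ω : Set (En n)) (hΩ : IsOpen Ω) (f : En n → ℝ)
    (g : En n → En n)
    (h : En n → Fin n → En n) (hf : MemW2pLoc 1 Ω f g h) :
    μH[(n : ℝ) - 1] (Ω \ ⋃ k, lhT Ω g k) = 0 := by
  refine measure_mono_null ?_ (lh_null hn Ω hΩ f g h hf)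
  rintro x ⟨hx, hxT⟩
  refine ⟨hx, fun k => ?_⟩
  by_contra hcon
  push Not at hcon
  apply hxT
  obtain ⟨ε, hε, hball⟩ := Metric.isOpen_iff.1 hΩ x hx
  obtain ⟨k1, hk1⟩ := exists_nat_ge ‖x‖
  obtain ⟨k2, hk2⟩ := exists_nat_one_div_lt (show 0 < ε / 3 by positivity)
  refine mem_iUnion.2 ⟨max k (max k1 k2), ?_, ?_, ?_⟩
  · refine hk1.trans ?_
    exact_mod_cast (le_max_left k1 k2).trans (le_max_right k _)
  · refine (ball_subset_ball ?_).trans hball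
    have h3 : 1 / (((max k (max k1 k2) : ℕ) : ℝ) + 1) ≤ 1 / ((k2 : ℝ) + 1) :=
      Nat.one_div_le_one_div ((le_max_right k1 k2).trans (le_max_right k _))
    have : 3 / (((max k (max k1 k2) : ℕ) : ℝ) + 1) = 3 * (1 / (((max k (max k1 k2) : ℕ) : ℝ) + 1)) := by
      ring
    rw [this]
    linarith
  · intro r hr hr2
    have h3 : 1 / (((max k (max k1 k2) : ℕ) : ℝ) + 1) ≤ 1 / ((k : ℝ) + 1) :=
      Nat.one_div_le_one_div (le_max_left k _)
    refine (hcon r hr (hr2.trans_le h3)).trans ?_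
    have h2 : (k : ℝ≥0∞) ≤ (max k (max k1 k2) : ℕ) := by exact_mod_cast le_max_left k _
    gcongr

theorem lhT_lip {n : ℕ} (Ω : Set (En n)) (f : En n → ℝ)
    (g : En n → En n)
    (h : En n → Fin n → En n) (hf : MemW2pLoc 1 Ω f g h) (k : ℕ) :
    ∃ K : ℝ≥0, LipschitzOnWith K (preciseRep f) (lhT Ω g k) := by
  obtain ⟨C, hC, hcmp⟩ := lh_cmp Ω f g h hf ((k : ℝ≥0) + 1)
  set δ := 1 / ((k : ℝ) + 1) with hδd
  have hδ : 0 < δ := by positivity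
  have hδ3 : 3 / ((k : ℝ) + 1) = 3 * δ := by rw [hδd]; ring
  have hcmp2 : ∀ x ∈ lhT Ω g k, ∀ ρ, 0 < ρ → ρ < δ → ∀ (y : En n) (ρ' : ℝ), ρ / 2 ≤ ρ' →
      ball y ρ' ⊆ ball x ρ → |ballAvg f y ρ' - ballAvg f x ρ| ≤ C * ρ := by
    intro x hx ρ h0 h1
    refine hcmp x ρ h0 ?_ ?_
    · refine Subset.trans (closedBall_subset_ball ?_) hx.2.1
      rw [hδ3]; linarith
    · have := hx.2.2 ρ h0 h1
      simpa using this
  have htele : ∀ x ∈ lhT Ω g k, ∀ ρ, 0 < ρ → ρ < δ →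
      |preciseRep f x - ballAvg f x ρ| ≤ 2 * C * ρ := by
    intro x hx
    apply lh_prec f x (2 * C) δ (by positivity) hδ
    apply lh_tele (fun r => ballAvg f x r) C δ hC
    intro ρ ρ' h1 h2 h3 h4
    exact hcmp2 x hx ρ h1 h2 x ρ' h3 (ball_subset_ball h4)
  refine lh_lip _ (lhT_compact Ω g k) _ (8 * C) (δ / 2) (by positivity) (by positivity) ?_
  intro x hx y hy hd
  rcases eq_or_lt_of_le (dist_nonneg (x := x) (y := y)) with h0 | h0
  · have : x = y := dist_eq_zero.1 h0.symm
    subst this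
    simp
  · set d := dist x y with hdd
    have h1 := htele x hx (2 * d) (by linarith) (by linarith)
    have h2 := htele y hy d h0 (by linarith)
    have h3 := hcmp2 x hx (2 * d) (by linarith) (by linarith) y d (by linarith) (by
      intro z hz
      rw [mem_ball] at hz ⊢
      have := dist_triangle z y x
      rw [dist_comm y x] at this
      linarith)
    rw [abs_le] at h1 h2 h3 ⊢
    constructor <;> linarith

theorem lh_cap_empty {n : ℕ} : cap 1 (∅ : Set (En n)) = 0 := by
  refine le_antisymm ?_ bot_le
  refine (iInf₂_le ∅ ⟨subset_rfl, isOpen_empty⟩).trans ?_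
  refine iSup₂_le fun F hF => ?_
  have : F = ∅ := subset_empty_iff.1 hF.1
  subst this
  refine (iInf₂_le (fun _ => 0) ⟨contDiff_const, HasCompactSupport.zero, by simp⟩).trans ?_
  simp

theorem lh_qe {n : ℕ} (F : En n → ℝ) (s : Set (En n)) (h : ∃ K : ℝ≥0, LipschitzOnWith K F s) :
    LipschitzOnQE 1 F s :=
  ⟨∅, empty_subset _, lh_cap_empty, by simpa using h⟩

theorem lh_finite_lip {n : ℕ} (F : En n → ℝ) (s : Set (En n)) (hs : s.Finite) :
    ∃ K : ℝ≥0, LipschitzOnWith K F s := by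
  obtain ⟨δ, hδ, h⟩ : ∃ δ > 0, ∀ x ∈ s, ∀ y ∈ s, dist x y < δ → x = y := by
    have hT : ((s ×ˢ s) ∩ {p | p.1 ≠ p.2}).Finite := (hs.prod hs).inter_of_left _
    rcases ((s ×ˢ s) ∩ {p | p.1 ≠ p.2}).eq_empty_or_nonempty with h0 | h0
    · refine ⟨1, one_pos, fun x hx y hy _ => ?_⟩
      by_contra hne
      have : (x, y) ∈ ((s ×ˢ s) ∩ {p | p.1 ≠ p.2}) := ⟨⟨hx, hy⟩, hne⟩
      rw [h0] at this
      exact this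
    · obtain ⟨p, hp, hmin⟩ := hT.exists_minimalFor (fun p => dist p.1 p.2) _ h0
      refine ⟨dist p.1 p.2, dist_pos.2 hp.2, fun x hx y hy hd => ?_⟩
      by_contra hne
      have := hmin (j := (x, y)) ⟨⟨hx, hy⟩, hne⟩ hd.le
      exact absurd hd (not_lt.2 this)
  refine lh_lip s hs.isCompact F 0 δ le_rfl hδ fun x hx y hy hd => ?_
  rw [h x hx y hy hd]; simp

theorem lh_low {n : ℕ} (hn : n ≤ 1) (B : Set (En n)) (hB : MeasurableSet B)
    (hBfin : μH[(n : ℝ) - 1] B < ⊤) : B.Finite := by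
  rcases Nat.eq_zero_or_pos n with h0 | h0
  · subst h0
    exact B.toFinite
  · have h1 : n = 1 := by omega
    subst h1
    by_contra hinf
    have := Set.Infinite.meas_eq_top (μ := μH[((1:ℕ) : ℝ) - 1]) (s := B) hinf
      ⟨1, one_ne_zero, fun x _ => by
        simp only [Nat.cast_one, sub_self]
        rw [Measure.hausdorffMeasure_zero_singleton]⟩
    exact hBfin.ne this

/-- the refined Luzin type theorem for `W^{2,1}_loc` functions with respect to the
`(n-1)`-Hausdorff measure. -/
theorem luzin_hausdorff {n : ℕ} (Ω : Set (En n)) (hΩ : IsOpen Ω)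
    (f : En n → ℝ) (g : En n → En n) (h : En n → Fin n → En n)
    (hf : MemW2pLoc 1 Ω f g h)
    (B : Set (En n)) (hB : MeasurableSet B) (hBΩ : B ⊆ Ω)
    (hBfin : μH[(n : ℝ) - 1] B < ⊤) :
    ∀ ε : ℝ≥0∞, 0 < ε →
      ∃ Bε : Set (En n), Bε ⊆ B ∧ MeasurableSet Bε ∧
        LipschitzOnQE 1 (preciseRep f) Bε ∧
        μH[(n : ℝ) - 1] (B \ Bε) < ε := by
  intro ε hε
  rcases Nat.lt_or_ge n 2 with hn | hn
  · refine ⟨B, subset_rfl, hB, lh_qe _ _ (lh_finite_lip _ _ (lh_low (by omega) B hB hBfin)), ?_⟩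
    simpa using hε
  · have hlim := tendsto_measure_iInter_atTop (μ := μH[(n : ℝ) - 1]) (s := fun k => B \ lhT Ω g k)
      (fun k => (hB.diff (lhT_closed Ω g k).measurableSet).nullMeasurableSet)
      (fun a b hab => sdiff_subset_sdiff_right (lhT_mono Ω g hab))
      ⟨0, measure_ne_top_of_subset sdiff_subset hBfin.ne⟩
    have h0 : μH[(n : ℝ) - 1] (⋂ k, B \ lhT Ω g k) = 0 := by
      refine measure_mono_null ?_ (lhT_null hn Ω hΩ f g h hf)
      intro x hx
      rw [mem_iInter] at hx
      refine ⟨hBΩ (hx 0).1, fun hx2 => ?_⟩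
      obtain ⟨k, hk⟩ := mem_iUnion.1 hx2
      exact (hx k).2 hk
    rw [h0] at hlim
    obtain ⟨k, hk⟩ := (hlim.eventually_lt_const hε).exists
    refine ⟨B ∩ lhT Ω g k, inter_subset_left, hB.inter (lhT_closed Ω g k).measurableSet, ?_, ?_⟩
    · obtain ⟨K, hK⟩ := lhT_lip Ω f g h hf k
      exact lh_qe _ _ ⟨K, hK.mono inter_subset_right⟩
    · rw [sdiff_self_inter]
      exact hk
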